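/- arXiv:2303.03390 — 3 statements merged into one kernel-verified Lean document; each statement's English description precedes it below -/
import Mathlib

section
/- The map Φ : 𝒲 → 𝒲 defined by [Φ(u)](x)(a) = ∫_𝕏 f(y, u(y)) κ_a(x,dy) is well defined and is a contraction with Lipschitz constant cL with respect to the weighted supremum norm ‖u‖ = sup_{(x,a)∈𝕏×A} [ω(x)(a)^{-1} |u(x)(a)|], i.e., for all u, w ∈ 𝒲 it holds that ‖Φ(u) − Φ(w)‖ ≤ cL ‖u − w‖. -/
/-!
Write `g_u y = f y (u y)`. If `|u - v| ≤ D w` pointwise, the Lipschitz hypothesis gives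
`|g_u y - g_v y| ≤ L D sup_b w y b`, and integrating against `κ_a(x, ·)` bounds
`∫ |g_u - g_v| dκ_a(x, ·)` by `c L D w x a`: this is `lintegral_diff_le`. With `v = 0`, together
with the bound on `∫ |f(y, 0)| κ_a(x, dy)`, it yields integrability and the weighted bound on `Φ(u)`.
With `v = u'` and `D = ‖u - u'‖` (a supremum of a bounded family) it yields the contraction estimate.
-/

open MeasureTheory ProbabilityTheory

/-- The weighted Lipschitz estimate behind both halves of the theorem. It is stated with
`ℝ≥0∞`-valued integrals, so that it can also be used to establish integrability. -/
lemma lintegral_diff_le {𝕏 : Type*} [MeasurableSpace 𝕏] {A : Type*}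
    {c L D : ℝ} (hL : 0 ≤ L) (hD : 0 ≤ D) (κ : A → ProbabilityTheory.Kernel 𝕏 𝕏)
    {f : 𝕏 → (A → ℝ) → ℝ} {w : 𝕏 → A → ℝ}
    (hf_lip : ∀ (x : 𝕏) (r s : A → ℝ),
      ENNReal.ofReal |f x r - f x s|
        ≤ ENNReal.ofReal L * ⨆ b : A, ENNReal.ofReal |r b - s b|)
    (hw_int : ∀ (x : 𝕏) (a : A),
      (∫⁻ y, (⨆ b : A, ENNReal.ofReal (w y b)) ∂(κ a x)) ≤ ENNReal.ofReal (c * w x a))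
    {u v : 𝕏 → A → ℝ} (huv : ∀ x a, |u x a - v x a| ≤ D * w x a) (x : 𝕏) (a : A) :
    ∫⁻ y, ENNReal.ofReal |f y (u y) - f y (v y)| ∂(κ a x)
      ≤ ENNReal.ofReal (c * L * D * w x a) := by
  calc ∫⁻ y, ENNReal.ofReal |f y (u y) - f y (v y)| ∂(κ a x)
      ≤ ∫⁻ y, ENNReal.ofReal (L * D) * ⨆ b : A, ENNReal.ofReal (w y b) ∂(κ a x) := by
        refine lintegral_mono fun y => (hf_lip y _ _).trans ?_
        rw [ENNReal.ofReal_mul hL, mul_assoc, ENNReal.mul_iSup (a := ENNReal.ofReal D)]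
        refine mul_le_mul_right (iSup_mono fun b => ?_) _
        rw [← ENNReal.ofReal_mul hD]
        exact ENNReal.ofReal_le_ofReal (huv y b)
    _ = ENNReal.ofReal (L * D) * ∫⁻ y, ⨆ b : A, ENNReal.ofReal (w y b) ∂(κ a x) :=
        lintegral_const_mul' _ _ ENNReal.ofReal_ne_top
    _ ≤ ENNReal.ofReal (L * D) * ENNReal.ofReal (c * w x a) := by
        gcongr
        exact hw_int x a
    _ = ENNReal.ofReal (c * L * D * w x a) := by
        rw [← ENNReal.ofReal_mul (mul_nonneg hL hD)]
        ring_nf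

lemma integrable_of_lintegral_abs_le {α : Type*} [MeasurableSpace α] {μ : Measure α}
    {g : α → ℝ} {K : ℝ} (hg : Measurable g)
    (h : ∫⁻ y, ENNReal.ofReal |g y| ∂μ ≤ ENNReal.ofReal K) : Integrable g μ := by
  refine ⟨hg.aestronglyMeasurable, ?_⟩
  rw [hasFiniteIntegral_iff_norm]
  exact h.trans_lt ENNReal.ofReal_lt_top

lemma abs_integral_le_of_lintegral_abs_le {α : Type*} [MeasurableSpace α] {μ : Measure α}
    {g : α → ℝ} {K : ℝ} (hK : 0 ≤ K)
    (h : ∫⁻ y, ENNReal.ofReal |g y| ∂μ ≤ ENNReal.ofReal K) : |∫ y, g y ∂μ| ≤ K := by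
  have := norm_integral_le_lintegral_norm (μ := μ) g
  exact this.trans (ENNReal.toReal_le_of_le_ofReal hK h)

/-- The fixed-point map `Φ : 𝒲 → 𝒲`, `[Φ(u)](x)(a) = ∫ f(y,u(y)) κ_a(x,dy)`, is well defined
(it maps elements of the weighted space `𝒲` into `𝒲`, the integrals being finite) and is a
contraction with Lipschitz constant `cL` for the weighted supremum norm
`‖u‖ = sup_{(x,a)} ω(x)(a)⁻¹ |u(x)(a)|`. -/
theorem stmt1
    {𝕏 : Type*} [MeasurableSpace 𝕏] [Nonempty 𝕏]
    {A : Type*} [Countable A] [Nonempty A]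
    (c L : ℝ) (hc : 0 ≤ c) (hL : 0 ≤ L) (hcL : c * L < 1)
    (κ : A → ProbabilityTheory.Kernel 𝕏 𝕏) [∀ a, IsMarkovKernel (κ a)]
    (f : 𝕏 → (A → ℝ) → ℝ)
    (hf : Measurable fun p : 𝕏 × (A → ℝ) => f p.1 p.2)
    (w : 𝕏 → A → ℝ) (hw_pos : ∀ x a, 0 < w x a) (hw_meas : Measurable w)
    (hf_lip : ∀ (x : 𝕏) (r s : A → ℝ),
      ENNReal.ofReal |f x r - f x s|
        ≤ ENNReal.ofReal L * ⨆ b : A, ENNReal.ofReal |r b - s b|)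
    (hw_int : ∀ (x : 𝕏) (a : A),
      (∫⁻ y, (⨆ b : A, ENNReal.ofReal (w y b)) ∂(κ a x)) ≤ ENNReal.ofReal (c * w x a))
    (hf0 : ∃ C : ℝ, ∀ (x : 𝕏) (a : A),
      (∫⁻ y, ENNReal.ofReal |f y 0| ∂(κ a x)) ≤ ENNReal.ofReal (C * w x a))
    -- `u` and `u'` are elements of `𝒲`:
    (u u' : 𝕏 → A → ℝ)
    (hu_meas : Measurable u) (hu_bd : ∃ C : ℝ, ∀ x a, |u x a| ≤ C * w x a)
    (hu'_meas : Measurable u') (hu'_bd : ∃ C : ℝ, ∀ x a, |u' x a| ≤ C * w x a) :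
    -- well definedness: `Φ(u) ∈ 𝒲` (in particular all the integrals are finite)
    ((∀ x a, Integrable (fun y => f y (u y)) (κ a x)) ∧
      Measurable (fun x => fun a => ∫ y, f y (u y) ∂(κ a x)) ∧
      ∃ C : ℝ, ∀ x a, |∫ y, f y (u y) ∂(κ a x)| ≤ C * w x a) ∧
    -- contraction property `‖Φ(u) − Φ(u')‖ ≤ cL ‖u − u'‖`
    (∀ x a,
      |(∫ y, f y (u y) ∂(κ a x)) - ∫ y, f y (u' y) ∂(κ a x)| / w x a
        ≤ c * L * ⨆ p : 𝕏 × A, |u p.1 p.2 - u' p.1 p.2| / w p.1 p.2) := by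
  have hmeas : ∀ v : 𝕏 → A → ℝ, Measurable v → Measurable fun y => f y (v y) :=
    fun v hv => hf.comp (measurable_id.prodMk hv)
  have hbound : ∀ v : 𝕏 → A → ℝ, Measurable v → (∃ C : ℝ, ∀ x a, |v x a| ≤ C * w x a) →
      ∃ K : ℝ, 0 ≤ K ∧ ∀ x a,
        ∫⁻ y, ENNReal.ofReal |f y (v y)| ∂(κ a x) ≤ ENNReal.ofReal (K * w x a) := by
    rintro v hv ⟨C, hC⟩
    obtain ⟨C₀, hC₀⟩ := hf0
    -- The constants `C` and `C₀` are not assumed nonnegative, hence the absolute values.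
    refine ⟨c * L * |C| + |C₀|, by positivity, fun x a => ?_⟩
    have hw := hw_pos x a
    have h1 := lintegral_diff_le (u := v) (v := fun _ => 0) hL (abs_nonneg C) κ hf_lip hw_int
      (fun x a => by
        simpa using (hC x a).trans
          (mul_le_mul_of_nonneg_right (le_abs_self C) (hw_pos x a).le)) x a
    have h2 : ∫⁻ y, ENNReal.ofReal |f y 0| ∂(κ a x) ≤ ENNReal.ofReal (|C₀| * w x a) :=
      (hC₀ x a).trans (ENNReal.ofReal_le_ofReal
        (mul_le_mul_of_nonneg_right (le_abs_self C₀) hw.le))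
    have hm0 : Measurable fun y => f y 0 := hmeas (fun _ => 0) measurable_const
    calc ∫⁻ y, ENNReal.ofReal |f y (v y)| ∂(κ a x)
        ≤ ∫⁻ y, (ENNReal.ofReal |f y (v y) - f y 0| + ENNReal.ofReal |f y 0|) ∂(κ a x) := by
          refine lintegral_mono fun y => ?_
          rw [← ENNReal.ofReal_add (abs_nonneg _) (abs_nonneg _)]
          refine ENNReal.ofReal_le_ofReal ?_
          simpa using abs_add_le (f y (v y) - f y 0) (f y 0)
      _ = (∫⁻ y, ENNReal.ofReal |f y (v y) - f y 0| ∂(κ a x))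
            + ∫⁻ y, ENNReal.ofReal |f y 0| ∂(κ a x) :=
          lintegral_add_right _ hm0.abs.ennreal_ofReal
      _ ≤ ENNReal.ofReal (c * L * |C| * w x a) + ENNReal.ofReal (|C₀| * w x a) :=
          add_le_add h1 h2
      _ = ENNReal.ofReal ((c * L * |C| + |C₀|) * w x a) := by
          rw [← ENNReal.ofReal_add (by positivity) (by positivity), add_mul]
  obtain ⟨K, hK, hKu⟩ := hbound u hu_meas hu_bd
  obtain ⟨K', -, hKu'⟩ := hbound u' hu'_meas hu'_bd
  have hint : ∀ x a, Integrable (fun y => f y (u y)) (κ a x) := fun x a =>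
    integrable_of_lintegral_abs_le (hmeas u hu_meas) (hKu x a)
  have hint' : ∀ x a, Integrable (fun y => f y (u' y)) (κ a x) := fun x a =>
    integrable_of_lintegral_abs_le (hmeas u' hu'_meas) (hKu' x a)
  refine ⟨⟨hint, ?_, K, fun x a => ?_⟩, fun x a => ?_⟩
  · refine measurable_pi_iff.mpr fun a => ?_
    exact ((hmeas u hu_meas).stronglyMeasurable.integral_kernel (κ := κ a)).measurable
  · exact abs_integral_le_of_lintegral_abs_le (mul_nonneg hK (hw_pos x a).le) (hKu x a)
  · set D : ℝ := ⨆ p : 𝕏 × A, |u p.1 p.2 - u' p.1 p.2| / w p.1 p.2 with hDdef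
    have hD : 0 ≤ D := Real.iSup_nonneg fun p => div_nonneg (abs_nonneg _) (hw_pos _ _).le
    -- Boundedness is what makes the real-valued supremum `D` an actual upper bound.
    have hbdd : BddAbove (Set.range fun p : 𝕏 × A => |u p.1 p.2 - u' p.1 p.2| / w p.1 p.2) := by
      obtain ⟨C, hC⟩ := hu_bd
      obtain ⟨C', hC'⟩ := hu'_bd
      refine ⟨C + C', ?_⟩
      rintro _ ⟨p, rfl⟩
      refine (div_le_iff₀ (hw_pos p.1 p.2)).mpr ?_
      linarith [abs_sub (u p.1 p.2) (u' p.1 p.2), hC p.1 p.2, hC' p.1 p.2]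
    have huv : ∀ x a, |u x a - u' x a| ≤ D * w x a := fun x a =>
      (div_le_iff₀ (hw_pos x a)).mp (le_ciSup hbdd (x, a))
    rw [div_le_iff₀ (hw_pos x a), ← integral_sub (hint x a) (hint' x a)]
    have hw := hw_pos x a
    exact abs_integral_le_of_lintegral_abs_le (by positivity)
      (lintegral_diff_le hL hD κ hf_lip hw_int huv x a)
end

section
/- In the MLFP setting with A finite, assume there are L ∈ [0,∞) and a measurable weight function ω : 𝕏 → (0,∞) such that for all (x,a) ∈ 𝕏 × A and r,s ∈ ℝ^A it holds that |f(x,r) − f(x,s)| ≤ L max_{b∈A}|r(b) − s(b)| and (E[|f(X^{0,x,a},0)|² + |ω(X^{0,x,a})|²])^{1/2} ≤ L ω(x). Then for every n ∈ ℕ₀ it holds that sup_{x∈𝕏} (E[max_{a∈A} |V_n^0(x)(a)|²] / ω(x)²) < ∞. -/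
open MeasureTheory

/-!
The bound is proved for all indices `θ` and each fixed `a`, by strong induction on `n`, in the form
`E[|V_n^θ(x)(a)|²] ≤ C w(x)²` (`HasGrowth`); the maximum over the finite set `A` is dominated by the
sum. Random fields with this property are closed under finite linear combinations and domination.
By the recursion and the Lipschitz condition it therefore suffices to bound `f(X^{η,x,a}, 0)`, which
is the moment hypothesis, and the fields `V_l^ζ(X^{η,x,a})(b)` with `l < n`.

For the latter, `V_l^ζ` is jointly measurable with respect to `𝒳 ⊗ σ(ℱ^κ : κ a strict extension
of ζ)` (`measurable_V`). The indices `η` and `ζ` that occur have the same length, so `η` is not a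
strict extension of `ζ` and `X^{η,x,a}` is independent of `V_l^ζ`. By Fubini
(`lintegral_comp_of_indepFun`), `E[|V_l^ζ(X^{η,x,a})(b)|²]` is the integral of
`y ↦ E[|V_l^ζ(y)(b)|²]` against the law of `X^{η,x,a}`, hence at most
`C E[w(X^{η,x,a})²] ≤ C L² w(x)²`.
-/

open ProbabilityTheory
open scoped NNReal ENNReal

namespace MLFP

/-- A jointly measurable real random field `g` on `𝕏` whose second moment is bounded by a constant
multiple of `w ^ 2`. -/
def HasGrowth {𝕏 Ω : Type*} [MeasurableSpace 𝕏] [MeasurableSpace Ω] (μ : Measure Ω)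
    (w : 𝕏 → ℝ) (g : 𝕏 → Ω → ℝ) : Prop :=
  (Measurable fun p : 𝕏 × Ω => g p.1 p.2) ∧
    ∃ C : ℝ≥0, ∀ x, ∫⁻ ω, ENNReal.ofReal (g x ω ^ 2) ∂μ ≤ C * ENNReal.ofReal (w x ^ 2)

/-! ### Closure properties of the growth bound -/

section Growth

variable {𝕏 Ω : Type*} [MeasurableSpace 𝕏] [MeasurableSpace Ω] {μ : Measure Ω} {w : 𝕏 → ℝ}

lemma HasGrowth.mono {g h : 𝕏 → Ω → ℝ} (hh : HasGrowth μ w h)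
    (hg : Measurable fun p : 𝕏 × Ω => g p.1 p.2) (hle : ∀ x ω, |g x ω| ≤ |h x ω|) :
    HasGrowth μ w g := by
  obtain ⟨-, C, hC⟩ := hh
  exact ⟨hg, C, fun x => (lintegral_mono fun ω =>
    ENNReal.ofReal_le_ofReal (sq_le_sq.2 (hle x ω))).trans (hC x)⟩

lemma HasGrowth.abs {g : 𝕏 → Ω → ℝ} (hg : HasGrowth μ w g) :
    HasGrowth μ w fun x ω => |g x ω| :=
  hg.mono (measurable_norm.comp hg.1) fun _ _ => (abs_abs _).le

lemma HasGrowth.zero : HasGrowth μ w fun _ _ => 0 :=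
  ⟨measurable_const, 0, fun x => by simp⟩

lemma HasGrowth.const_mul {g : 𝕏 → Ω → ℝ} (hg : HasGrowth μ w g) (c : ℝ) :
    HasGrowth μ w fun x ω => c * g x ω := by
  obtain ⟨hm, C, hC⟩ := hg
  refine ⟨hm.const_mul c, Real.toNNReal (c ^ 2) * C, fun x => ?_⟩
  have h : ∀ ω, ENNReal.ofReal ((c * g x ω) ^ 2)
      = ENNReal.ofReal (c ^ 2) * ENNReal.ofReal (g x ω ^ 2) := fun ω => by
    rw [mul_pow, ENNReal.ofReal_mul (sq_nonneg c)]
  simp_rw [h]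
  rw [lintegral_const_mul' _ _ ENNReal.ofReal_ne_top, ENNReal.coe_mul, mul_assoc]
  exact mul_le_mul_right (hC x) _

lemma HasGrowth.add {g h : 𝕏 → Ω → ℝ} (hg : HasGrowth μ w g) (hh : HasGrowth μ w h) :
    HasGrowth μ w fun x ω => g x ω + h x ω := by
  obtain ⟨hgm, C, hC⟩ := hg
  obtain ⟨hhm, D, hD⟩ := hh
  refine ⟨hgm.add hhm, 2 * (C + D), fun x => ?_⟩
  have hgx : Measurable (g x) := hgm.comp (measurable_const.prodMk measurable_id)
  have hle : ∀ ω, ENNReal.ofReal ((g x ω + h x ω) ^ 2)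
      ≤ 2 * (ENNReal.ofReal (g x ω ^ 2) + ENNReal.ofReal (h x ω ^ 2)) := fun ω => by
    rw [← ENNReal.ofReal_add (sq_nonneg _) (sq_nonneg _),
      show (2 : ℝ≥0∞) = ENNReal.ofReal 2 by simp, ← ENNReal.ofReal_mul (by norm_num)]
    exact ENNReal.ofReal_le_ofReal add_sq_le
  calc ∫⁻ ω, ENNReal.ofReal ((g x ω + h x ω) ^ 2) ∂μ
      ≤ ∫⁻ ω, 2 * (ENNReal.ofReal (g x ω ^ 2) + ENNReal.ofReal (h x ω ^ 2)) ∂μ :=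
        lintegral_mono hle
    _ = 2 * (∫⁻ ω, ENNReal.ofReal (g x ω ^ 2) ∂μ + ∫⁻ ω, ENNReal.ofReal (h x ω ^ 2) ∂μ) := by
        rw [lintegral_const_mul' _ _ (by simp),
          lintegral_add_left (hgx.pow_const 2).ennreal_ofReal]
    _ ≤ 2 * (C * ENNReal.ofReal (w x ^ 2) + D * ENNReal.ofReal (w x ^ 2)) := by
        gcongr
        · exact hC x
        · exact hD x
    _ = _ := by push_cast; ring

lemma HasGrowth.sub {g h : 𝕏 → Ω → ℝ} (hg : HasGrowth μ w g) (hh : HasGrowth μ w h) :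
    HasGrowth μ w fun x ω => g x ω - h x ω := by
  simpa [sub_eq_add_neg] using hg.add (hh.const_mul (-1))

lemma HasGrowth.sum {ι : Type*} (s : Finset ι) {g : ι → 𝕏 → Ω → ℝ}
    (hg : ∀ i ∈ s, HasGrowth μ w (g i)) : HasGrowth μ w fun x ω => ∑ i ∈ s, g i x ω := by
  classical
  induction s using Finset.induction_on with
  | empty => simpa using HasGrowth.zero
  | insert i s hi ih =>
    simp_rw [Finset.sum_insert hi]
    exact (hg i (Finset.mem_insert_self i s)).add
      (ih fun j hj => hg j (Finset.mem_insert_of_mem hj))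

end Growth

lemma iSup_abs_le_sum {A : Type*} [Fintype A] [Nonempty A] (r : A → ℝ) :
    ⨆ b, |r b| ≤ ∑ b, |r b| :=
  ciSup_le fun b => Finset.single_le_sum (f := fun b => |r b|)
    (fun c _ => abs_nonneg (r c)) (Finset.mem_univ b)

/-! ### Independence -/

/-- Fubini for a function of two independent random variables. -/
lemma lintegral_comp_of_indepFun {𝕏 Ω E : Type*} [MeasurableSpace 𝕏] [MeasurableSpace Ω]
    [MeasurableSpace E] {μ : Measure Ω} [IsProbabilityMeasure μ] {Y : Ω → 𝕏} {Z : Ω → E}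
    (hY : Measurable Y) (hZ : Measurable Z) (hYZ : IndepFun Y Z μ)
    {g : 𝕏 × E → ℝ≥0∞} (hg : Measurable g) :
    ∫⁻ ω, g (Y ω, Z ω) ∂μ = ∫⁻ ω, ∫⁻ ω', g (Y ω, Z ω') ∂μ ∂μ := by
  have := Measure.isProbabilityMeasure_map (μ := μ) hZ.aemeasurable
  have := Measure.isProbabilityMeasure_map (μ := μ) hY.aemeasurable
  rw [← lintegral_map hg (hY.prodMk hZ),
    (indepFun_iff_map_prod_eq_prod_map_map hY.aemeasurable hZ.aemeasurable).1 hYZ,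
    lintegral_prod _ hg.aemeasurable, lintegral_map hg.lintegral_prod_right' hY]
  exact lintegral_congr fun ω => lintegral_map (hg.comp (measurable_const.prodMk measurable_id)) hZ

/-- The case of `lintegral_comp_of_indepFun` in which the second variable is the identity map into
`Ω` equipped with the sub-σ-algebra `m₂`. -/
lemma lintegral_comp_of_indep {𝕏 Ω : Type*} [mX : MeasurableSpace 𝕏] [mΩ : MeasurableSpace Ω]
    {μ : Measure Ω} [IsProbabilityMeasure μ] {m₁ m₂ : MeasurableSpace Ω} (h₁ : m₁ ≤ mΩ)
    (h₂ : m₂ ≤ mΩ) (hind : Indep m₁ m₂ μ) {Y : Ω → 𝕏} (hY : Measurable[m₁] Y)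
    {g : 𝕏 × Ω → ℝ≥0∞} (hg : @Measurable _ _ (mX.prod m₂) _ g) :
    ∫⁻ ω, g (Y ω, ω) ∂μ = ∫⁻ ω, ∫⁻ ω', g (Y ω, ω') ∂μ ∂μ := by
  refine @lintegral_comp_of_indepFun 𝕏 Ω Ω mX mΩ m₂ μ _ Y id (hY.mono h₁ le_rfl)
    (measurable_id'' h₂) ?_ g hg
  rw [IndepFun_iff_Indep, MeasurableSpace.comap_id]
  exact indep_of_indep_of_le_left hind hY.comap_le

/-- The multi-indices that properly extend `θ`. -/
def strictExt (θ : List ℤ) : Set (List ℤ) := {ζ | θ <+: ζ ∧ θ.length < ζ.length}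

/-- The σ-algebra generated by all `F ζ` with `ζ` a proper extension of `θ`. -/
abbrev extSigma {Ω : Type*} (F : List ℤ → MeasurableSpace Ω) (θ : List ℤ) : MeasurableSpace Ω :=
  ⨆ ζ ∈ strictExt θ, F ζ

lemma append_mem_strictExt (θ : List ℤ) (i j : ℤ) : θ ++ [i, j] ∈ strictExt θ :=
  ⟨List.prefix_append _ _, by simp⟩

lemma le_extSigma {Ω : Type*} (F : List ℤ → MeasurableSpace Ω) {θ ζ : List ℤ}
    (h : ζ ∈ strictExt θ) : F ζ ≤ extSigma F θ :=
  le_iSup₂_of_le ζ h le_rfl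

lemma extSigma_anti {Ω : Type*} (F : List ℤ → MeasurableSpace Ω) {θ ζ : List ℤ}
    (h : ζ ∈ strictExt θ) : extSigma F ζ ≤ extSigma F θ :=
  iSup₂_le fun _ hκ => le_extSigma F ⟨h.1.trans hκ.1, h.2.trans hκ.2⟩

lemma indep_extSigma {Ω : Type*} [mΩ : MeasurableSpace Ω] {μ : Measure Ω}
    {F : List ℤ → MeasurableSpace Ω} (hFsub : ∀ θ, F θ ≤ mΩ) (hF : iIndep F μ)
    {η ζ : List ℤ} (h : η.length = ζ.length) : Indep (F η) (extSigma F ζ) μ := by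
  have hd : Disjoint ({η} : Set (List ℤ)) (strictExt ζ) :=
    Set.disjoint_singleton_left.2 fun hη => hη.2.ne h.symm
  simpa [extSigma] using indep_iSup_of_disjoint hFsub hF hd

lemma measurable_prod_mono {𝕏 Ω β : Type*} [mX : MeasurableSpace 𝕏] [MeasurableSpace β]
    {m m' : MeasurableSpace Ω} (h : m ≤ m') {g : 𝕏 × Ω → β}
    (hg : @Measurable _ _ (mX.prod m) _ g) : @Measurable _ _ (mX.prod m') _ g :=
  hg.mono (sup_le_sup le_rfl (MeasurableSpace.comap_mono h)) le_rfl

lemma measurable_field_comp {𝕏 Ω A : Type*} [MeasurableSpace 𝕏] [MeasurableSpace Ω]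
    {Y : 𝕏 → Ω → 𝕏} (hY : Measurable fun p : 𝕏 × Ω => Y p.1 p.2)
    {f : 𝕏 → (A → ℝ) → ℝ} (hf : Measurable fun p : 𝕏 × (A → ℝ) => f p.1 p.2)
    {U : 𝕏 → A → Ω → ℝ} (hU : ∀ b, Measurable fun p : 𝕏 × Ω => U p.1 b p.2) :
    Measurable fun p : 𝕏 × Ω => f (Y p.1 p.2) fun b => U (Y p.1 p.2) b p.2 :=
  hf.comp (hY.prodMk (measurable_pi_lambda _ fun b => (hU b).comp (hY.prodMk measurable_snd)))

/-! ### The recursion -/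

section Recursion

variable {𝕏 Ω A : Type*} [mX : MeasurableSpace 𝕏] {M : ℕ} {F : List ℤ → MeasurableSpace Ω}
  {f : 𝕏 → (A → ℝ) → ℝ} {X : List ℤ → 𝕏 → A → Ω → 𝕏} {V : ℕ → List ℤ → 𝕏 → A → Ω → ℝ}

/-- `V_n^θ` is jointly measurable with respect to the randomness carried by the proper extensions
of `θ` only. -/
lemma measurable_V
    (hf : Measurable fun p : 𝕏 × (A → ℝ) => f p.1 p.2)
    (hX : ∀ θ a, @Measurable _ _ (mX.prod (F θ)) _ fun p : 𝕏 × Ω => X θ p.1 a p.2)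
    (hV : ∀ (n : ℕ) (θ : List ℤ) (x : 𝕏) (a : A) (ω : Ω),
      V n θ x a ω =
        ∑ l ∈ Finset.range n, ((M : ℝ) ^ (n - l))⁻¹ *
          ∑ i ∈ Finset.range (M ^ (n - l)),
            (f (X (θ ++ [(l : ℤ), (i : ℤ) + 1]) x a ω)
                (fun b => V l (θ ++ [(l : ℤ), (i : ℤ) + 1])
                  (X (θ ++ [(l : ℤ), (i : ℤ) + 1]) x a ω) b ω)
              - if l = 0 then 0 else
                f (X (θ ++ [(l : ℤ), (i : ℤ) + 1]) x a ω)
                  (fun b => V (l - 1) (θ ++ [-(l : ℤ), (i : ℤ) + 1])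
                    (X (θ ++ [(l : ℤ), (i : ℤ) + 1]) x a ω) b ω)))
    (n : ℕ) : ∀ (θ : List ℤ) (a : A),
      @Measurable _ _ (mX.prod (extSigma F θ)) _ fun p : 𝕏 × Ω => V n θ p.1 a p.2 := by
  induction n using Nat.strong_induction_on with
  | _ n ih =>
    intro θ a
    let _ : MeasurableSpace Ω := extSigma F θ
    have key : ∀ k < n, ∀ i j i' j' : ℤ, Measurable fun p : 𝕏 × Ω =>
        f (X (θ ++ [i, j]) p.1 a p.2)
          fun b => V k (θ ++ [i', j']) (X (θ ++ [i, j]) p.1 a p.2) b p.2 :=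
      fun k hk i j i' j' => measurable_field_comp (Y := fun x ω => X (θ ++ [i, j]) x a ω)
        (measurable_prod_mono (le_extSigma F (append_mem_strictExt θ i j)) (hX _ a)) hf
        fun b => measurable_prod_mono (extSigma_anti F (append_mem_strictExt θ i' j')) (ih k hk _ b)
    simp_rw [hV n θ]
    refine Finset.measurable_fun_sum _ fun l hl =>
      (Finset.measurable_fun_sum _ fun i _ => ?_).const_mul _
    have hl := Finset.mem_range.1 hl
    refine (key l hl _ _ _ _).sub ?_
    split_ifs
    · exact measurable_const
    · exact key (l - 1) (by omega) _ _ _ _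

/-- The induction step: let `U` be a field with growth `w` that depends only on the randomness of
the proper extensions of `ζ`, and let `η` have the same length as `ζ`. If `f(X^{η,x,a}, 0)` and
`w(X^{η,x,a})` have growth `w`, then so does `f(X^{η,x,a}, U(X^{η,x,a}))`, since `X^η` and `U` are
independent. -/
lemma HasGrowth.step [mΩ : MeasurableSpace Ω] {μ : Measure Ω} [IsProbabilityMeasure μ]
    [Fintype A] [Nonempty A]
    (hFsub : ∀ θ, F θ ≤ mΩ) (hF : iIndep F μ)
    (hf : Measurable fun p : 𝕏 × (A → ℝ) => f p.1 p.2)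
    (hX : ∀ θ a, @Measurable _ _ (mX.prod (F θ)) _ fun p : 𝕏 × Ω => X θ p.1 a p.2)
    {L : ℝ} (hL : 0 ≤ L) {w : 𝕏 → ℝ}
    (hf_lip : ∀ (x : 𝕏) (r s : A → ℝ), |f x r - f x s| ≤ L * ⨆ b : A, |r b - s b|)
    {η ζ : List ℤ} (hlen : η.length = ζ.length) (a : A)
    (hmom_f : HasGrowth μ w fun x ω => f (X η x a ω) 0)
    (hmom_w : HasGrowth μ w fun x ω => w (X η x a ω))
    {U : 𝕏 → A → Ω → ℝ}
    (hUm : ∀ b, @Measurable _ _ (mX.prod (extSigma F ζ)) _ fun p : 𝕏 × Ω => U p.1 b p.2)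
    (hU : ∀ b, HasGrowth μ w fun x ω => U x b ω) :
    HasGrowth μ w fun x ω => f (X η x a ω) fun b => U (X η x a ω) b ω := by
  have hXη : Measurable fun p : 𝕏 × Ω => X η p.1 a p.2 := measurable_prod_mono (hFsub η) (hX η a)
  have hUX : ∀ b, HasGrowth μ w fun x ω => U (X η x a ω) b ω := fun b => by
    obtain ⟨hm, C, hC⟩ := hU b
    obtain ⟨-, D, hD⟩ := hmom_w
    refine ⟨hm.comp (hXη.prodMk measurable_snd), C * D, fun x => ?_⟩
    have hext : extSigma F ζ ≤ mΩ := iSup₂_le fun κ _ => hFsub κ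
    have hXx : Measurable[F η] (X η x a) := by
      let _ : MeasurableSpace Ω := F η
      exact (hX η a).comp (measurable_const.prodMk measurable_id)
    have hg : @Measurable _ _ (mX.prod (extSigma F ζ)) _
        fun p : 𝕏 × Ω => ENNReal.ofReal (U p.1 b p.2 ^ 2) := by
      let _ : MeasurableSpace Ω := extSigma F ζ
      exact ((hUm b).pow_const 2).ennreal_ofReal
    calc ∫⁻ ω, ENNReal.ofReal (U (X η x a ω) b ω ^ 2) ∂μ
        = ∫⁻ ω, ∫⁻ ω', ENNReal.ofReal (U (X η x a ω) b ω' ^ 2) ∂μ ∂μ :=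
          lintegral_comp_of_indep (hFsub η) hext (indep_extSigma hFsub hF hlen) hXx hg
      _ ≤ ∫⁻ ω, C * ENNReal.ofReal (w (X η x a ω) ^ 2) ∂μ := lintegral_mono fun ω => hC _
      _ = C * ∫⁻ ω, ENNReal.ofReal (w (X η x a ω) ^ 2) ∂μ :=
          lintegral_const_mul' _ _ ENNReal.coe_ne_top
      _ ≤ C * (D * ENNReal.ofReal (w x ^ 2)) := mul_le_mul_right (hD x) _
      _ = _ := by push_cast; ring
  refine (hmom_f.abs.add ((HasGrowth.sum Finset.univ fun b _ => (hUX b).abs).const_mul L)).mono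
    (measurable_field_comp (Y := fun x ω => X η x a ω) hXη hf fun b => (hU b).1) fun x ω => ?_
  refine le_trans ?_ (le_abs_self _)
  set y := X η x a ω
  have h1 := hf_lip y (fun b => U y b ω) 0
  simp only [Pi.zero_apply, sub_zero] at h1
  have h2 := mul_le_mul_of_nonneg_left (iSup_abs_le_sum fun b => U y b ω) hL
  have h3 := abs_sub_abs_le_abs_sub (f y fun b => U y b ω) (f y 0)
  linarith

end Recursion

end MLFP

/-- Second-moment bounds for MLFP approximations (Lemma 3.4 of the paper).  In the MLFP setting
with finite `A` (the index set `Θ = ⋃_n ℤ^n` is modelled by `List ℤ`, `(θ,l,i)` by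
`θ ++ [l,i]`, and the distinguished index `0 ∈ Θ` by `[0]`), under the Lipschitz condition
`|f(x,r) − f(x,s)| ≤ L max_{b∈A}|r(b) − s(b)|` and the moment bound
`(E[|f(X^{0,x,a},0)|² + |ω(X^{0,x,a})|²])^{1/2} ≤ L ω(x)`, for every `n ∈ ℕ₀` one has
`sup_{x∈𝕏} E[max_{a∈A} |V_n^0(x)(a)|²]/ω(x)² < ∞`. -/
theorem stmt6
    {𝕏 : Type*} [mX : MeasurableSpace 𝕏] [Nonempty 𝕏]
    {Ω : Type*} [mΩ : MeasurableSpace Ω] (μ : Measure Ω) [IsProbabilityMeasure μ]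
    {A : Type*} [Fintype A] [Nonempty A]
    (M : ℕ)
    (F : List ℤ → MeasurableSpace Ω) (hFsub : ∀ θ, F θ ≤ mΩ)
    (hFindep : ProbabilityTheory.iIndep F μ)
    (f : 𝕏 → (A → ℝ) → ℝ)
    (hf : Measurable fun p : 𝕏 × (A → ℝ) => f p.1 p.2)
    (X : List ℤ → 𝕏 → A → Ω → 𝕏)
    (hXmeas : ∀ θ : List ℤ,
      @Measurable (𝕏 × Ω) (A → 𝕏) (mX.prod (F θ)) MeasurableSpace.pi
        fun p => fun a => X θ p.1 a p.2)
    (hXid : ∀ θ η : List ℤ,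
      Measure.map (fun ω => fun p : 𝕏 × A => X θ p.1 p.2 ω) μ
        = Measure.map (fun ω => fun p : 𝕏 × A => X η p.1 p.2 ω) μ)
    (V : ℕ → List ℤ → 𝕏 → A → Ω → ℝ)
    (hV : ∀ (n : ℕ) (θ : List ℤ) (x : 𝕏) (a : A) (ω : Ω),
      V n θ x a ω =
        ∑ l ∈ Finset.range n, ((M : ℝ) ^ (n - l))⁻¹ *
          ∑ i ∈ Finset.range (M ^ (n - l)),
            (f (X (θ ++ [(l : ℤ), (i : ℤ) + 1]) x a ω)
                (fun b => V l (θ ++ [(l : ℤ), (i : ℤ) + 1])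
                  (X (θ ++ [(l : ℤ), (i : ℤ) + 1]) x a ω) b ω)
              - if l = 0 then 0 else
                f (X (θ ++ [(l : ℤ), (i : ℤ) + 1]) x a ω)
                  (fun b => V (l - 1) (θ ++ [-(l : ℤ), (i : ℤ) + 1])
                    (X (θ ++ [(l : ℤ), (i : ℤ) + 1]) x a ω) b ω)))
    (L : ℝ) (hL : 0 ≤ L)
    (w : 𝕏 → ℝ) (hw_pos : ∀ x, 0 < w x) (hw_meas : Measurable w)
    (hf_lip : ∀ (x : 𝕏) (r s : A → ℝ), |f x r - f x s| ≤ L * ⨆ b : A, |r b - s b|)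
    (hmom : ∀ (x : 𝕏) (a : A),
      (∫⁻ ω, ENNReal.ofReal
          (|f (X [0] x a ω) 0| ^ 2 + w (X [0] x a ω) ^ 2) ∂μ)
        ≤ ENNReal.ofReal ((L * w x) ^ 2)) :
    ∀ n : ℕ, ∃ C : ℝ, ∀ x : 𝕏,
      (∫⁻ ω, ENNReal.ofReal ((⨆ a : A, |V n [0] x a ω|) ^ 2) ∂μ)
        ≤ ENNReal.ofReal (C * w x ^ 2) := by

  have hX : ∀ θ a, @Measurable _ _ (mX.prod (F θ)) _ fun p : 𝕏 × Ω => X θ p.1 a p.2 :=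
    fun θ a => (measurable_pi_apply a).comp (hXmeas θ)
  have hX' : ∀ θ a, Measurable fun p : 𝕏 × Ω => X θ p.1 a p.2 :=
    fun θ a => MLFP.measurable_prod_mono (hFsub θ) (hX θ a)
  have hXx : ∀ θ x a, Measurable (X θ x a) :=
    fun θ x a => (hX' θ a).comp (measurable_const.prodMk measurable_id)
  have hlaw : ∀ θ x a, Measure.map (X θ x a) μ = Measure.map (X [0] x a) μ := fun θ x a => by
    have hpi : ∀ κ, Measurable fun ω => fun p : 𝕏 × A => X κ p.1 p.2 ω :=
      fun κ => measurable_pi_lambda _ fun p => hXx κ p.1 p.2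
    have h := congrArg (Measure.map fun q : 𝕏 × A → 𝕏 => q (x, a)) (hXid θ [0])
    rwa [Measure.map_map (measurable_pi_apply _) (hpi θ),
      Measure.map_map (measurable_pi_apply _) (hpi [0])] at h
  -- The moment hypothesis, transferred from the index `[0]` to all indices.
  have hmom' : ∀ θ a (φ : 𝕏 → ℝ), Measurable φ → (∀ y, φ y ^ 2 ≤ |f y 0| ^ 2 + w y ^ 2) →
      MLFP.HasGrowth μ w fun x ω => φ (X θ x a ω) := fun θ a φ hφ hle => by
    refine ⟨hφ.comp (hX' θ a), Real.toNNReal (L ^ 2), fun x => ?_⟩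
    have hm : Measurable fun y => ENNReal.ofReal (φ y ^ 2) := (hφ.pow_const 2).ennreal_ofReal
    calc ∫⁻ ω, ENNReal.ofReal (φ (X θ x a ω) ^ 2) ∂μ
        = ∫⁻ ω, ENNReal.ofReal (φ (X [0] x a ω) ^ 2) ∂μ := by
          rw [← lintegral_map hm (hXx θ x a), hlaw, lintegral_map hm (hXx [0] x a)]
      _ ≤ _ := lintegral_mono fun ω => ENNReal.ofReal_le_ofReal (hle _)
      _ ≤ _ := hmom x a
      _ = _ := by rw [mul_pow, ENNReal.ofReal_mul (sq_nonneg L)]; rfl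
  have hf0 : Measurable fun y => f y 0 := hf.comp (measurable_id.prodMk measurable_const)
  have hVm := MLFP.measurable_V hf hX hV
  have main : ∀ n θ a, MLFP.HasGrowth μ w fun x ω => V n θ x a ω := by
    intro n
    induction n using Nat.strong_induction_on with
    | _ n ih =>
      intro θ a
      have key : ∀ k < n, ∀ i j i' j' : ℤ, MLFP.HasGrowth μ w fun x ω =>
          f (X (θ ++ [i, j]) x a ω)
            fun b => V k (θ ++ [i', j']) (X (θ ++ [i, j]) x a ω) b ω :=
        fun k hk i j i' j' => MLFP.HasGrowth.step hFsub hFindep hf hX hL hf_lip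
          (ζ := θ ++ [i', j']) (by simp) a
          (hmom' _ a _ hf0 fun y => by rw [sq_abs]; linarith [sq_nonneg (w y)])
          (hmom' _ a w hw_meas fun y => by linarith [sq_nonneg |f y 0|])
          (hVm k _) (ih k hk _)
      simp_rw [hV n θ]
      refine MLFP.HasGrowth.sum _ fun l hl =>
        (MLFP.HasGrowth.sum _ fun i _ => ?_).const_mul _
      have hl := Finset.mem_range.1 hl
      refine (key l hl _ _ _ _).sub ?_
      split_ifs
      · exact MLFP.HasGrowth.zero
      · exact key (l - 1) (by omega) _ _ _ _
  intro n
  obtain ⟨-, C, hC⟩ := MLFP.HasGrowth.sum Finset.univ fun a _ => (main n [0] a).abs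
  refine ⟨C, fun x => ?_⟩
  rw [ENNReal.ofReal_mul C.coe_nonneg, ENNReal.ofReal_coe_nnreal]
  refine le_trans (lintegral_mono fun ω => ENNReal.ofReal_le_ofReal ?_) (hC x)
  exact pow_le_pow_left₀ (Real.iSup_nonneg fun a => abs_nonneg _) (MLFP.iSup_abs_le_sum _) 2
end

section
/- In the MLFP setting with A finite and under the assumptions |f(x,r) − f(x,s)| ≤ L max_{b∈A}|r(b) − s(b)| and (E[|f(X^{0,x,a},0)|² + ‖v(X^{0,x,a})‖_∞² + |ω(X^{0,x,a})|²])^{1/2} ≤ c ω(x) for all (x,a) ∈ 𝕏 × A, it holds for all n ∈ ℕ₀, (x,a) ∈ 𝕏 × A, and θ ∈ Θ that Var[V_n^θ(x)(a)] = Σ_{l=0}^{n−1} M^{−(n−l)} Var[f(X^{0,x,a}, V_l^0(X^{0,x,a})) − 1_ℕ(l) f(X^{0,x,a}, V_{max{l−1,0}}^1(X^{0,x,a}))], i.e. the variance of the level-n MLFP approximation equals the weighted sum over the levels of the variances of the single-sample level differences. -/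
/-!
The level-`n` approximation is a weighted sum of the single-sample level differences
`D_l^{η,ζ} = f(X^η, V_l^η(X^η)) - 1_{l ≠ 0} f(X^η, V_{l-1}^ζ(X^η))` (`lvl`) with
`η = θ ++ [l, i]` and `ζ = θ ++ [-l, i]`. Three facts give the variance identity.

* Independence. The field `V_n^θ` only depends on the σ-algebras `F ξ` with `ξ` a proper extension
  of `θ` (`Setting.measurable_V`). The extensions of the indices belonging to different pairs
  `(l, i)` are disjoint, so the level differences in the sum are independent
  (`Setting.iIndepFun_lvl`).
* Equality in law. The law of the field `V_n^θ` does not depend on `θ` (`Setting.sameLaw_V`), and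
  the law of `D_l^{η,ζ}` does not depend on `(η, ζ)` as long as neither index extends the other
  (`Setting.sameLaw_lvl`). These are proved together by strong induction on the level. Since the
  fields are evaluated at random points, the outer points `X^η`, which are independent of the
  inner fields, are frozen by a Fubini argument (`lintegral_freeze`, `map_eq_of_freeze`); this is
  where joint measurability of the fields is needed.
* Square integrability. By induction, the second moments are bounded by a constant multiple of
  `w x ^ 2` (`Setting.exists_eLpNorm_le`): the Lipschitz bound reduces `D_l` to `f(X, 0)` and
  `V_l(X)`, and freezing `X` reduces the latter to the second moment of `w(X)`.

Variances of independent square integrable variables add up, and the `M ^ (n - l)` terms of level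
`l` each carry the factor `(M ^ (n - l))⁻¹ ^ 2`.
-/

open MeasureTheory
open ProbabilityTheory
open scoped ENNReal NNReal

namespace MLFP

/-! ### Independence and frozen arguments -/

section General

variable {Ω : Type*} {m₁ m₂ m₁' m₂' : MeasurableSpace Ω} {mΩ : MeasurableSpace Ω}
  {μ : Measure Ω}

/-- Freezing an independent argument: if `Y` is `m₁`-measurable and `G` is jointly measurable
with `m₂` on the `Ω`-factor, where `m₁` and `m₂` are independent, then the mean of `G (Y ω, ω)`
is computed by first averaging `G (z, ·)` with `z` frozen and then averaging over the law of `Y`. -/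
lemma lintegral_freeze [IsProbabilityMeasure μ] {𝕐 : Type*} [mY : MeasurableSpace 𝕐]
    (h₁ : m₁ ≤ mΩ) (h₂ : m₂ ≤ mΩ) (hind : Indep m₁ m₂ μ) {Y : Ω → 𝕐} (hY : Measurable[m₁] Y)
    {G : 𝕐 × Ω → ℝ≥0∞} (hG : Measurable[mY.prod m₂] G) :
    ∫⁻ ω, G (Y ω, ω) ∂μ = ∫⁻ z, ∫⁻ ω, G (z, ω) ∂μ ∂(μ.map Y) := by
  have hid : @Measurable Ω Ω mΩ m₂ id := measurable_id'' h₂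
  have hY' : Measurable Y := hY.mono h₁ le_rfl
  have hI : @IndepFun Ω 𝕐 Ω mΩ mY m₂ Y id μ := by
    rw [@IndepFun_iff_Indep _ _ _ _ mY m₂, MeasurableSpace.comap_id]
    exact indep_of_indep_of_le_left hind hY.comap_le
  -- The pair `(Y, id)`, with `m₂` on the second factor, has the product of the marginals as law.
  have hprod := (@indepFun_iff_map_prod_eq_prod_map_map _ _ _ mΩ _ _ _ mY m₂ _
    hY'.aemeasurable (@Measurable.aemeasurable _ _ mΩ m₂ _ _ hid)).1 hI
  have hpair : @Measurable Ω (𝕐 × Ω) mΩ (mY.prod m₂) (fun ω => (Y ω, id ω)) :=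
    @Measurable.prodMk _ mΩ _ _ mY m₂ _ _ hY' hid
  calc ∫⁻ ω, G (Y ω, ω) ∂μ
      = @lintegral _ (mY.prod m₂) (@Measure.map _ _ mΩ (mY.prod m₂) (fun ω => (Y ω, id ω)) μ) G :=
        (@lintegral_map _ _ mΩ (mY.prod m₂) _ _ _ hG hpair).symm
    _ = ∫⁻ z, (@lintegral _ m₂ (@Measure.map _ _ mΩ m₂ id μ) fun ω => G (z, ω)) ∂(μ.map Y) := by
        rw [hprod]
        have : @IsProbabilityMeasure _ m₂ (@Measure.map _ _ mΩ m₂ id μ) :=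
          @Measure.isProbabilityMeasure_map _ _ mΩ m₂ μ _ _ (@Measurable.aemeasurable _ _ mΩ m₂ _ _ hid)
        exact @lintegral_prod _ _ mY m₂ _ _ _ _ hG.aemeasurable
    _ = _ := by
        refine lintegral_congr fun z => ?_
        exact @lintegral_map _ _ mΩ m₂ _ _ _
          (hG.comp (@measurable_prodMk_left _ _ mY m₂ z)) hid

lemma prod_mono_right {𝕐 : Type*} [mY : MeasurableSpace 𝕐] (h : m₁ ≤ m₂) :
    mY.prod m₁ ≤ mY.prod m₂ := sup_le_sup_left (MeasurableSpace.comap_mono h) _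

lemma map_apply_freeze [IsProbabilityMeasure μ] {𝕐 E : Type*} [mY : MeasurableSpace 𝕐]
    [MeasurableSpace E] (h₁ : m₁ ≤ mΩ) (h₂ : m₂ ≤ mΩ) (hind : Indep m₁ m₂ μ)
    {Y : Ω → 𝕐} (hY : Measurable[m₁] Y) {G : 𝕐 × Ω → E} (hG : Measurable[mY.prod m₂] G)
    {s : Set E} (hs : MeasurableSet s) :
    μ.map (fun ω => G (Y ω, ω)) s = ∫⁻ z, μ.map (fun ω => G (z, ω)) s ∂(μ.map Y) := by
  have hG0 : Measurable G := hG.mono (prod_mono_right h₂) le_rfl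
  have hY0 : Measurable Y := hY.mono h₁ le_rfl
  have := lintegral_freeze h₁ h₂ hind hY
    (G := fun p => s.indicator (fun _ => (1 : ℝ≥0∞)) (G p))
    ((measurable_const.indicator hs).comp hG)
  have e : ∀ g : Ω → E, Measurable g →
      ∫⁻ ω, s.indicator (fun _ => (1 : ℝ≥0∞)) (g ω) ∂μ = μ.map g s := by
    intro g hg
    rw [← lintegral_map (f := s.indicator fun _ => (1 : ℝ≥0∞)) (measurable_const.indicator hs) hg,
      lintegral_indicator hs]
    simp
  rw [e (fun ω => G (Y ω, ω)) (hG0.comp (hY0.prodMk measurable_id))] at this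
  rw [this]
  exact lintegral_congr fun z => e (fun ω => G (z, ω)) (hG0.comp measurable_prodMk_left)

/-- Equality in law of two compositions `G (Y ω, ω)` with independent arguments, from equality in
law of the outer arguments and equality in law of `G (z, ·)` for every frozen `z`. -/
lemma map_eq_of_freeze [IsProbabilityMeasure μ] {𝕐 E : Type*} [mY : MeasurableSpace 𝕐]
    [MeasurableSpace E]
    (h₁ : m₁ ≤ mΩ) (h₂ : m₂ ≤ mΩ) (hind : Indep m₁ m₂ μ)
    (h₁' : m₁' ≤ mΩ) (h₂' : m₂' ≤ mΩ) (hind' : Indep m₁' m₂' μ)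
    {Y Y' : Ω → 𝕐} (hY : Measurable[m₁] Y) (hY' : Measurable[m₁'] Y')
    {G G' : 𝕐 × Ω → E} (hG : Measurable[mY.prod m₂] G) (hG' : Measurable[mY.prod m₂'] G')
    (hYY : μ.map Y = μ.map Y')
    (hGG : ∀ z, μ.map (fun ω => G (z, ω)) = μ.map (fun ω => G' (z, ω))) :
    μ.map (fun ω => G (Y ω, ω)) = μ.map (fun ω => G' (Y' ω, ω)) := by
  ext s hs
  rw [map_apply_freeze h₁ h₂ hind hY hG hs, map_apply_freeze h₁' h₂' hind' hY' hG' hs, hYY]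
  exact lintegral_congr fun z => by rw [hGG z]

lemma eLpNorm_two_sq (g : Ω → ℝ) : eLpNorm g 2 μ ^ 2 = ∫⁻ ω, ‖g ω‖ₑ ^ 2 ∂μ := by
  have := eLpNorm_nnreal_pow_eq_lintegral (μ := μ) (f := g) (p := 2) (by norm_num)
  simpa using this

lemma eLpNorm_two_le_iff (g : Ω → ℝ) (K : ℝ≥0∞) :
    eLpNorm g 2 μ ≤ K ↔ ∫⁻ ω, ‖g ω‖ₑ ^ 2 ∂μ ≤ K ^ 2 := by
  rw [← eLpNorm_two_sq]
  exact (ENNReal.pow_le_pow_left_iff (n := 2) (by norm_num)).symm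

variable {I : Type*} {F : I → MeasurableSpace Ω}

/-- The σ-algebra generated by the `F ξ` with `ξ ∈ S`. -/
@[reducible] def sig (F : I → MeasurableSpace Ω) (S : Set I) : MeasurableSpace Ω := ⨆ ξ ∈ S, F ξ

lemma sig_mono {S T : Set I} (h : S ⊆ T) : sig F S ≤ sig F T := biSup_mono h

lemma le_sig {S : Set I} {ξ : I} (h : ξ ∈ S) : F ξ ≤ sig F S := le_biSup F h

lemma sig_le (hF : ∀ ξ, F ξ ≤ mΩ) (S : Set I) : sig F S ≤ mΩ := iSup₂_le fun ξ _ => hF ξ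

lemma indep_sig (hF : ∀ ξ, F ξ ≤ mΩ) (hi : iIndep F μ) {S T : Set I} (h : Disjoint S T) :
    Indep (sig F S) (sig F T) μ := indep_iSup_of_disjoint hF hi h

/-- Grouping: the σ-algebras attached to pairwise disjoint index sets are mutually independent. -/
lemma iIndep_sig [IsProbabilityMeasure μ] {J : Type*} (hF : ∀ ξ, F ξ ≤ mΩ) (hi : iIndep F μ) {S : J → Set I}
    (h : Pairwise fun i j => Disjoint (S i) (S j)) : iIndep (fun j => sig F (S j)) μ := by
  classical
  rw [iIndep_iff]
  intro s
  induction s using Finset.induction_on with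
  | empty => intro g _; simp
  | insert j s hj ih =>
    intro g hg
    rw [Finset.set_biInter_insert, Finset.prod_insert hj,
      ← ih fun i hi => hg i (Finset.mem_insert_of_mem hi)]
    have hd : Disjoint (S j) (⋃ i ∈ s, S i) := by
      rw [Set.disjoint_iUnion₂_right]
      intro i hi
      exact h (by rintro rfl; exact hj hi)
    refine (Indep_iff _ _ _).1 (indep_sig hF hi hd) _ _ (hg j (Finset.mem_insert_self _ _)) ?_
    refine @Finset.measurableSet_biInter _ _ (sig F (⋃ i ∈ s, S i)) _ s fun i hi => ?_
    exact sig_mono (Set.subset_biUnion_of_mem (u := S) hi) _ (hg i (Finset.mem_insert_of_mem hi))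

end General

/-! ### The recursive scheme -/

section Scheme

universe uA

variable {𝕏 : Type*} [mX : MeasurableSpace 𝕏] {Ω : Type*} {A : Type uA}

/-- The single-sample level difference
`f(X^η, V_l^η(X^η)) - 1_{l ≠ 0} f(X^η, V_{l-1}^ζ(X^η))` at the point `x` and component `a`. -/
def lvl (f : 𝕏 → (A → ℝ) → ℝ) (X : List ℤ → 𝕏 → A → Ω → 𝕏)
    (V : ℕ → List ℤ → 𝕏 → A → Ω → ℝ) (l : ℕ) (η ζ : List ℤ) (x : 𝕏) (a : A) (ω : Ω) : ℝ :=
  f (X η x a ω) (fun b => V l η (X η x a ω) b ω)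
    - if l = 0 then 0 else f (X η x a ω) (fun b => V (l - 1) ζ (X η x a ω) b ω)

/-- The proper extensions of the index `θ`: those `ξ` whose `F ξ` can influence `V n θ`. -/
def strict (θ : List ℤ) : Set (List ℤ) := {ξ | θ <+: ξ ∧ ξ ≠ θ}

/-- The indices `ξ` whose `F ξ` can influence `lvl l η ζ`. At level `0` the index `ζ` plays no
role. -/
def idx (l : ℕ) (η ζ : List ℤ) : Set (List ℤ) := {ξ | η <+: ξ ∨ (l ≠ 0 ∧ ζ <+: ξ)}

/-- The pair `(η, ζ)` is admissible at level `l` if neither index extends the other, which makes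
`X^η`, `V_l^η` and `V_{l-1}^ζ` independent; at level `0` nothing is required. -/
def Good (l : ℕ) (η ζ : List ℤ) : Prop := l ≠ 0 → ¬ η <+: ζ ∧ ¬ ζ <+: η

/-- The multilevel fixed-point setting, without the growth assumptions: independent σ-algebras
`F θ`, identically distributed random fields `X θ` with `X θ` measurable with respect to `F θ`, and
the recursion defining `V`. -/
structure Setting {mΩ : MeasurableSpace Ω} (μ : Measure Ω) (M : ℕ) (F : List ℤ → MeasurableSpace Ω)
    (f : 𝕏 → (A → ℝ) → ℝ) (X : List ℤ → 𝕏 → A → Ω → 𝕏)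
    (V : ℕ → List ℤ → 𝕏 → A → Ω → ℝ) : Prop where
  le : ∀ θ, F θ ≤ mΩ
  indep : iIndep F μ
  meas_f : Measurable fun p : 𝕏 × (A → ℝ) => f p.1 p.2
  meas_X : ∀ θ : List ℤ, @Measurable (𝕏 × Ω) (A → 𝕏) (mX.prod (F θ)) MeasurableSpace.pi
    fun p => fun a => X θ p.1 a p.2
  law_X : ∀ θ η : List ℤ, Measure.map (fun ω => fun p : 𝕏 × A => X θ p.1 p.2 ω) μ
    = Measure.map (fun ω => fun p : 𝕏 × A => X η p.1 p.2 ω) μ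
  rec_V : ∀ (n : ℕ) (θ : List ℤ) (x : 𝕏) (a : A) (ω : Ω),
    V n θ x a ω = ∑ l ∈ Finset.range n, ((M : ℝ) ^ (n - l))⁻¹ *
      ∑ i ∈ Finset.range (M ^ (n - l)),
        lvl f X V l (θ ++ [(l : ℤ), (i : ℤ) + 1]) (θ ++ [-(l : ℤ), (i : ℤ) + 1]) x a ω

/-! ### Index combinatorics -/

lemma good_append (θ : List ℤ) (l i : ℕ) :
    Good l (θ ++ [(l : ℤ), (i : ℤ) + 1]) (θ ++ [-(l : ℤ), (i : ℤ) + 1]) := by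
  intro hl
  constructor <;> rw [List.prefix_append_right_inj] <;> simp [List.cons_prefix_cons] <;> omega

lemma idx_append_subset (θ : List ℤ) (l i : ℕ) :
    idx l (θ ++ [(l : ℤ), (i : ℤ) + 1]) (θ ++ [-(l : ℤ), (i : ℤ) + 1]) ⊆ strict θ := by
  rintro ξ (⟨t, rfl⟩ | ⟨-, t, rfl⟩) <;> simp [strict]

lemma idx_append_disjoint (θ : List ℤ) {l i l' i' : ℕ} (h : ¬ (l = l' ∧ i = i')) :
    Disjoint (idx l (θ ++ [(l : ℤ), (i : ℤ) + 1]) (θ ++ [-(l : ℤ), (i : ℤ) + 1]))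
      (idx l' (θ ++ [(l' : ℤ), (i' : ℤ) + 1]) (θ ++ [-(l' : ℤ), (i' : ℤ) + 1])) := by
  rw [Set.disjoint_left]
  rintro ξ (⟨t, rfl⟩ | ⟨-, t, rfl⟩) (⟨s, hs⟩ | ⟨-, s, hs⟩) <;>
  · simp at hs
    omega

lemma strict_subset_idx (l : ℕ) (η ζ : List ℤ) : strict η ⊆ idx l η ζ := fun _ h => Or.inl h.1

/-- The level terms of `V n θ` are enumerated by pairs `(l, i)` with `l < n` and `i < M ^ (n - l)`. -/
abbrev Idx (M n : ℕ) : Type := Σ l : Fin n, Fin (M ^ (n - (l : ℕ)))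

/-- The first index of the level term `j` of `V n θ`. -/
def fst' (θ : List ℤ) {M n : ℕ} (j : Idx M n) : List ℤ :=
  θ ++ [((j.1 : ℕ) : ℤ), ((j.2 : ℕ) : ℤ) + 1]

/-- The second index of the level term `j` of `V n θ`. -/
def snd' (θ : List ℤ) {M n : ℕ} (j : Idx M n) : List ℤ :=
  θ ++ [-((j.1 : ℕ) : ℤ), ((j.2 : ℕ) : ℤ) + 1]

lemma pairwise_disjoint_idx (θ : List ℤ) (M n : ℕ) :
    Pairwise fun j j' : Idx M n => Disjoint (idx j.1 (fst' θ j) (snd' θ j))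
      (idx j'.1 (fst' θ j') (snd' θ j')) := by
  rintro ⟨l, i⟩ ⟨l', i'⟩ h
  refine idx_append_disjoint θ ?_
  rintro ⟨h1, h2⟩
  apply h
  obtain rfl : l = l' := Fin.ext h1
  obtain rfl : i = i' := Fin.ext h2
  rfl

/-! ### Measurability -/

variable {mΩ : MeasurableSpace Ω} {μ : Measure Ω} {M : ℕ} {F : List ℤ → MeasurableSpace Ω}
  {f : 𝕏 → (A → ℝ) → ℝ} {X : List ℤ → 𝕏 → A → Ω → 𝕏} {V : ℕ → List ℤ → 𝕏 → A → Ω → ℝ}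

lemma measurable_comp_field (hf : Measurable fun p : 𝕏 × (A → ℝ) => f p.1 p.2)
    {Y : 𝕏 × Ω → 𝕏} {U : 𝕏 → A → Ω → ℝ} (hY : Measurable Y)
    (hU : Measurable fun p : 𝕏 × Ω => fun b => U p.1 b p.2) :
    Measurable fun p : 𝕏 × Ω => f (Y p) (fun b => U (Y p) b p.2) :=
  hf.comp (hY.prodMk (hU.comp (hY.prodMk measurable_snd)))

namespace Setting

lemma measurable_X (H : Setting μ M F f X V) (θ : List ℤ) (a : A) :
    Measurable[mX.prod (F θ)] fun p : 𝕏 × Ω => X θ p.1 a p.2 :=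
  (measurable_pi_apply a).comp (H.meas_X θ)

lemma measurable_X_fixed (H : Setting μ M F f X V) (θ : List ℤ) (x : 𝕏) (a : A) :
    Measurable[F θ] fun ω => X θ x a ω :=
  (H.measurable_X θ a).comp (@measurable_prodMk_left _ _ mX (F θ) x)

lemma rec_sum (H : Setting μ M F f X V) (n : ℕ) (θ : List ℤ) (x : 𝕏) (a : A) (ω : Ω) :
    V n θ x a ω = ∑ j : Idx M n, ((M : ℝ) ^ (n - (j.1 : ℕ)))⁻¹ *
      lvl f X V j.1 (fst' θ j) (snd' θ j) x a ω := by
  rw [H.rec_V, Finset.sum_range, Fintype.sum_sigma]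
  refine Finset.sum_congr rfl fun l _ => ?_
  rw [Finset.sum_range, Finset.mul_sum]
  rfl

lemma measurable_lvl_of (H : Setting μ M F f X V) {l : ℕ} {η ζ : List ℤ}
    (h1 : Measurable[mX.prod (sig F (strict η))] fun p : 𝕏 × Ω => fun b => V l η p.1 b p.2)
    (h2 : l ≠ 0 → Measurable[mX.prod (sig F (strict ζ))]
      fun p : 𝕏 × Ω => fun b => V (l - 1) ζ p.1 b p.2) (a : A) :
    Measurable[mX.prod (sig F (idx l η ζ))] fun p : 𝕏 × Ω => lvl f X V l η ζ p.1 a p.2 := by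
  have hX : Measurable[mX.prod (sig F (idx l η ζ))] fun p : 𝕏 × Ω => X η p.1 a p.2 :=
    (H.measurable_X η a).mono (prod_mono_right (le_sig (Or.inl (List.prefix_refl η)))) le_rfl
  have t1 := @measurable_comp_field _ mX _ _ (sig F (idx l η ζ)) _ H.meas_f _ _ hX
    (h1.mono (prod_mono_right (sig_mono (strict_subset_idx l η ζ))) le_rfl)
  by_cases hl : l = 0
  · simpa only [lvl, hl, if_true, sub_zero] using t1
  · have t2 := @measurable_comp_field _ mX _ _ (sig F (idx l η ζ)) _ H.meas_f _ _ hX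
      ((h2 hl).mono (prod_mono_right (sig_mono fun ξ hξ => Or.inr ⟨hl, hξ.1⟩)) le_rfl)
    simp only [lvl, hl, if_false]
    exact t1.sub t2

lemma measurable_V (H : Setting μ M F f X V) (n : ℕ) (θ : List ℤ) :
    Measurable[mX.prod (sig F (strict θ))] fun p : 𝕏 × Ω => fun b => V n θ p.1 b p.2 := by
  induction n using Nat.strong_induction_on generalizing θ with
  | _ n ih =>
  refine @measurable_pi_lambda _ _ _ (mX.prod (sig F (strict θ))) _ _ fun a => ?_
  simp only [H.rec_sum n θ]
  refine @Finset.measurable_sum _ _ _ _ _ _ (mX.prod (sig F (strict θ))) _ _ fun j _ => ?_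
  refine Measurable.const_mul ?_ _
  exact (H.measurable_lvl_of (ih j.1 j.1.2 _) (fun _ => ih _ (by omega) _) a).mono
    (prod_mono_right (sig_mono (idx_append_subset θ _ _))) le_rfl

lemma measurable_lvl (H : Setting μ M F f X V) (l : ℕ) (η ζ : List ℤ) (x : 𝕏) (a : A) :
    Measurable[sig F (idx l η ζ)] fun ω => lvl f X V l η ζ x a ω :=
  (H.measurable_lvl_of (H.measurable_V l η) (fun _ => H.measurable_V _ ζ) a).comp
    (@measurable_prodMk_left _ _ mX (sig F (idx l η ζ)) x)

lemma measurable_V_fixed (H : Setting μ M F f X V) (n : ℕ) (θ : List ℤ) (x : 𝕏) (a : A) :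
    Measurable[sig F (strict θ)] fun ω => V n θ x a ω :=
  ((measurable_pi_apply a).comp (H.measurable_V n θ)).comp
    (@measurable_prodMk_left _ _ mX (sig F (strict θ)) x)

/-! ### Laws -/

lemma V_zero (H : Setting μ M F f X V) (θ : List ℤ) (x : 𝕏) (a : A) (ω : Ω) :
    V 0 θ x a ω = 0 := by
  simp [H.rec_V]

/-- Equality in law of all finite or infinite marginals of `V n θ` and `V n θ'`. The points are
indexed by an arbitrary type because the recursion evaluates the fields at more and more points. -/
def SameLaw (μ : Measure Ω) (U U' : 𝕏 → A → Ω → ℝ) : Prop :=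
  ∀ (ι : Type uA) (y : ι → 𝕏), μ.map (fun ω (j : ι × A) => U (y j.1) j.2 ω)
    = μ.map (fun ω (j : ι × A) => U' (y j.1) j.2 ω)

/-- The indices `ξ` whose `F ξ` can influence the inner fields `V_l^η` and `V_{l-1}^ζ` of
`lvl l η ζ`. For admissible pairs `η` is not among them, so these fields are independent of `X^η`. -/
def inner (l : ℕ) (η ζ : List ℤ) : Set (List ℤ) := strict η ∪ {ξ | l ≠ 0 ∧ ξ ∈ strict ζ}

lemma indep_inner [IsProbabilityMeasure μ] (H : Setting μ M F f X V) {l : ℕ} {η ζ : List ℤ}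
    (hg : Good l η ζ) : Indep (F η) (sig F (inner l η ζ)) μ := by
  have : Disjoint {η} (inner l η ζ) := by
    rw [Set.disjoint_singleton_left]
    rintro (h | ⟨hl, h⟩)
    · exact h.2 rfl
    · exact (hg hl).2 h.1
  refine indep_of_indep_of_le_left (indep_sig H.le H.indep this) ?_
  exact le_sig rfl

lemma disjoint_strict {η ζ : List ℤ} (h1 : ¬ η <+: ζ) (h2 : ¬ ζ <+: η) :
    Disjoint (strict η) (strict ζ) := by
  rw [Set.disjoint_left]
  rintro ξ ⟨hη, -⟩ ⟨hζ, -⟩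
  rcases List.prefix_or_prefix_of_prefix hη hζ with h | h
  exacts [h1 h, h2 h]

/-- The level difference with the outer points frozen at `z`. -/
def frozen {κ : Type*} (f : 𝕏 → (A → ℝ) → ℝ) (V : ℕ → List ℤ → 𝕏 → A → Ω → ℝ) (l : ℕ)
    (η ζ : List ℤ) (p : (κ → 𝕏) × Ω) (j : κ) : ℝ :=
  f (p.1 j) (fun b => V l η (p.1 j) b p.2)
    - if l = 0 then 0 else f (p.1 j) (fun b => V (l - 1) ζ (p.1 j) b p.2)

lemma measurable_frozen (H : Setting μ M F f X V) {κ : Type*} (l : ℕ) (η ζ : List ℤ) :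
    Measurable[MeasurableSpace.pi.prod (sig F (inner l η ζ))]
      (frozen (κ := κ) f V l η ζ) := by
  refine @measurable_pi_lambda _ _ _ (MeasurableSpace.pi.prod (sig F (inner l η ζ))) _ _
    fun j => ?_
  have hz : Measurable[MeasurableSpace.pi.prod (sig F (inner l η ζ)),
      mX.prod (sig F (inner l η ζ))] fun p : (κ → 𝕏) × Ω => (p.1 j, p.2) :=
    @Measurable.prodMk _ (MeasurableSpace.pi.prod (sig F (inner l η ζ))) _ _ mX
      (sig F (inner l η ζ)) _ _
      ((measurable_pi_apply j).comp (@measurable_fst _ _ _ (sig F (inner l η ζ))))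
      (@measurable_snd _ _ _ (sig F (inner l η ζ)))
  have t1 := (@measurable_comp_field _ mX _ _ (sig F (inner l η ζ)) _ H.meas_f _ _
    (@measurable_fst _ _ mX (sig F (inner l η ζ)))
    ((H.measurable_V l η).mono
      (prod_mono_right (sig_mono (T := inner l η ζ) fun ξ h => Or.inl h)) le_rfl)).comp hz
  by_cases hl : l = 0
  · subst hl
    simp only [frozen, if_true, sub_zero]
    exact t1
  · have t2 := (@measurable_comp_field _ mX _ _ (sig F (inner l η ζ)) _ H.meas_f _ _
      (@measurable_fst _ _ mX (sig F (inner l η ζ)))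
      ((H.measurable_V (l - 1) ζ).mono
        (prod_mono_right (sig_mono (T := inner l η ζ) fun ξ h => Or.inr ⟨hl, h⟩)) le_rfl)).comp hz
    simp only [frozen, hl, if_false]
    exact t1.sub t2

/-- With frozen outer points the level difference is a function of the two independent fields
`V_l^η` and `V_{l-1}^ζ`, so its law does not depend on the admissible pair. -/
lemma map_frozen_eq [IsProbabilityMeasure μ] (H : Setting μ M F f X V) {l : ℕ}
    (P1 : ∀ θ θ', SameLaw μ (V l θ) (V l θ')) (P2 : ∀ θ θ', SameLaw μ (V (l - 1) θ) (V (l - 1) θ'))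
    {η ζ η' ζ' : List ℤ} (hg : Good l η ζ) (hg' : Good l η' ζ') {κ : Type uA} (z : κ → 𝕏) :
    μ.map (fun ω => frozen f V l η ζ (z, ω)) = μ.map (fun ω => frozen f V l η' ζ' (z, ω)) := by
  by_cases hl : l = 0
  · subst hl
    have e : ∀ η ζ ω, frozen f V 0 η ζ (z, ω) = fun j => f (z j) fun _ => 0 := by
      intro η ζ ω
      funext j
      simp [frozen, H.V_zero]
    simp only [e]
  have hmeas : ∀ n θ, Measurable fun ω (j : κ × A) => V n θ (z j.1) j.2 ω := fun n θ =>
    measurable_pi_lambda _ fun j => (H.measurable_V_fixed n θ _ _).mono (sig_le H.le _) le_rfl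
  have joint : ∀ {η ζ}, Good l η ζ →
      μ.map (fun ω => ((fun j : κ × A => V l η (z j.1) j.2 ω),
        (fun j : κ × A => V (l - 1) ζ (z j.1) j.2 ω)))
      = (μ.map fun ω (j : κ × A) => V l η (z j.1) j.2 ω).prod
        (μ.map fun ω (j : κ × A) => V (l - 1) ζ (z j.1) j.2 ω) := by
    intro η ζ hg
    refine (indepFun_iff_map_prod_eq_prod_map_map (hmeas _ _).aemeasurable
      (hmeas _ _).aemeasurable).1 ?_
    rw [IndepFun_iff_Indep]
    refine indep_of_indep_of_le_left (indep_of_indep_of_le_right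
      (indep_sig H.le H.indep (disjoint_strict (hg hl).1 (hg hl).2)) ?_) ?_
    · exact (@measurable_pi_lambda _ _ _ (sig F (strict ζ)) _ _
        fun j => H.measurable_V_fixed _ ζ _ _).comap_le
    · exact (@measurable_pi_lambda _ _ _ (sig F (strict η)) _ _
        fun j => H.measurable_V_fixed _ η _ _).comap_le
  let φ : (κ × A → ℝ) × (κ × A → ℝ) → κ → ℝ := fun u j =>
    f (z j) (fun b => u.1 (j, b)) - f (z j) (fun b => u.2 (j, b))
  have hφ : Measurable φ := by
    refine measurable_pi_lambda _ fun j => Measurable.sub ?_ ?_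
    · exact H.meas_f.comp (measurable_const.prodMk (by fun_prop))
    · exact H.meas_f.comp (measurable_const.prodMk (by fun_prop))
  have fac : ∀ η ζ, μ.map (fun ω => frozen f V l η ζ (z, ω))
      = (μ.map (fun ω => ((fun j : κ × A => V l η (z j.1) j.2 ω),
        (fun j : κ × A => V (l - 1) ζ (z j.1) j.2 ω)))).map φ := by
    intro η ζ
    rw [Measure.map_map hφ ((hmeas _ _).prodMk (hmeas _ _))]
    congr 1
    funext ω j
    simp [frozen, hl, φ]
  rw [fac, fac, joint hg, joint hg', P1 η η' κ z, P2 ζ ζ' κ z]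

/-- The law of the level difference does not depend on the admissible pair of indices. -/
lemma sameLaw_lvl [IsProbabilityMeasure μ] (H : Setting μ M F f X V) {l : ℕ}
    (P1 : ∀ θ θ', SameLaw μ (V l θ) (V l θ')) (P2 : ∀ θ θ', SameLaw μ (V (l - 1) θ) (V (l - 1) θ'))
    {η ζ η' ζ' : List ℤ} (hg : Good l η ζ) (hg' : Good l η' ζ') :
    SameLaw μ (lvl f X V l η ζ) (lvl f X V l η' ζ') := by
  intro ι y
  have hY : ∀ η, Measurable[F η] fun ω (j : ι × A) => X η (y j.1) j.2 ω := fun η =>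
    @measurable_pi_lambda _ _ _ (F η) _ _ fun j => H.measurable_X_fixed η _ _
  refine map_eq_of_freeze (H.le η) (sig_le H.le _) (indep_inner H hg) (H.le η') (sig_le H.le _)
    (indep_inner H hg') (hY η) (hY η') (measurable_frozen H l η ζ) (measurable_frozen H l η' ζ')
    ?_ (map_frozen_eq H P1 P2 hg hg')
  have hX : ∀ η, Measurable fun ω (p : 𝕏 × A) => X η p.1 p.2 ω := fun η =>
    measurable_pi_lambda _ fun p => (H.measurable_X_fixed η _ _).mono (H.le η) le_rfl
  have hr : Measurable fun (u : 𝕏 × A → 𝕏) (j : ι × A) => u (y j.1, j.2) := by fun_prop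
  have := congrArg (Measure.map fun (u : 𝕏 × A → 𝕏) (j : ι × A) => u (y j.1, j.2)) (H.law_X η η')
  rwa [Measure.map_map hr (hX η), Measure.map_map hr (hX η')] at this

/-- The level terms of `V n θ`, each as a family over the points `y`, are independent. -/
lemma iIndepFun_lvl [IsProbabilityMeasure μ] (H : Setting μ M F f X V) (n : ℕ) (θ : List ℤ)
    {κ : Type*} (y : κ → 𝕏 × A) :
    iIndepFun (fun (j : Idx M n) ω (k : κ) =>
      lvl f X V j.1 (fst' θ j) (snd' θ j) (y k).1 (y k).2 ω) μ := by
  rw [iIndepFun_iff_iIndep, iIndep_iff]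
  intro s g hg
  refine (iIndep_iff _ _).1 (iIndep_sig H.le H.indep (pairwise_disjoint_idx θ M n)) s
    fun j hj => ?_
  refine Measurable.comap_le ?_ _ (hg j hj)
  exact @measurable_pi_lambda _ _ _ (sig F _) _ _ fun k => H.measurable_lvl _ _ _ _ _

/-- The law of the random field `V n θ` does not depend on `θ`. -/
lemma sameLaw_V [IsProbabilityMeasure μ] (H : Setting μ M F f X V) (n : ℕ) (θ θ' : List ℤ) :
    SameLaw μ (V n θ) (V n θ') := by
  induction n using Nat.strong_induction_on generalizing θ θ' with
  | _ n ih =>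
  intro ι y
  have hm : ∀ θ (j : Idx M n), Measurable fun ω (k : ι × A) =>
      lvl f X V j.1 (fst' θ j) (snd' θ j) (y k.1) k.2 ω := fun θ j =>
    measurable_pi_lambda _ fun k => (H.measurable_lvl _ _ _ _ _).mono (sig_le H.le _) le_rfl
  have joint : ∀ θ, _ := fun θ => (iIndepFun_iff_map_fun_eq_pi_map
    fun j => (hm θ j).aemeasurable).1 (iIndepFun_lvl H n θ fun k : ι × A => (y k.1, k.2))
  let φ : (Idx M n → ι × A → ℝ) → ι × A → ℝ := fun u k =>
    ∑ j : Idx M n, ((M : ℝ) ^ (n - (j.1 : ℕ)))⁻¹ * u j k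
  have hφ : Measurable φ := by
    refine measurable_pi_lambda _ fun k => ?_
    fun_prop
  have fac : ∀ θ, μ.map (fun ω (k : ι × A) => V n θ (y k.1) k.2 ω)
      = (μ.map fun ω (j : Idx M n) (k : ι × A) =>
        lvl f X V j.1 (fst' θ j) (snd' θ j) (y k.1) k.2 ω).map φ := by
    intro θ
    rw [Measure.map_map hφ (measurable_pi_lambda _ (hm θ))]
    congr 1
    funext ω k
    exact H.rec_sum n θ _ _ _
  have same : ∀ j : Idx M n, μ.map (fun ω (k : ι × A) =>
        lvl f X V j.1 (fst' θ j) (snd' θ j) (y k.1) k.2 ω)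
      = μ.map (fun ω (k : ι × A) => lvl f X V j.1 (fst' θ' j) (snd' θ' j) (y k.1) k.2 ω) :=
    fun j => sameLaw_lvl H (ih _ j.1.2) (ih _ (by omega)) (good_append θ _ _)
      (good_append θ' _ _) ι y
  rw [fac, fac, joint θ, joint θ']
  simp only [same]

/-- Single-point version: level differences for admissible pairs are identically distributed. -/
lemma identDistrib_lvl [IsProbabilityMeasure μ] (H : Setting μ M F f X V) (l : ℕ)
    {η ζ η' ζ' : List ℤ} (hg : Good l η ζ) (hg' : Good l η' ζ') (x : 𝕏) (a : A) :
    IdentDistrib (fun ω => lvl f X V l η ζ x a ω) (fun ω => lvl f X V l η' ζ' x a ω) μ μ := by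
  have hm : ∀ η ζ a, Measurable fun ω => lvl f X V l η ζ x a ω := fun η ζ a =>
    (H.measurable_lvl l η ζ x a).mono (sig_le H.le _) le_rfl
  refine ⟨(hm _ _ _).aemeasurable, (hm _ _ _).aemeasurable, ?_⟩
  have h := sameLaw_lvl H (sameLaw_V H l) (sameLaw_V H (l - 1)) hg hg' PUnit fun _ => x
  have he : Measurable fun u : PUnit × A → ℝ => u (PUnit.unit, a) := by fun_prop
  have := congrArg (Measure.map fun u : PUnit × A → ℝ => u (PUnit.unit, a)) h
  rwa [Measure.map_map he (measurable_pi_lambda _ fun _ => hm _ _ _),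
    Measure.map_map he (measurable_pi_lambda _ fun _ => hm _ _ _)] at this


/-! ### Second moments -/

lemma eLpNorm_comp_X_eq (H : Setting μ M F f X V) {g : 𝕏 → ℝ} (hg : Measurable g)
    (θ η : List ℤ) (x : 𝕏) (a : A) :
    eLpNorm (fun ω => g (X θ x a ω)) 2 μ = eLpNorm (fun ω => g (X η x a ω)) 2 μ := by
  have hX : ∀ η, Measurable fun ω (p : 𝕏 × A) => X η p.1 p.2 ω := fun η =>
    measurable_pi_lambda _ fun p => (H.measurable_X_fixed η _ _).mono (H.le η) le_rfl
  have hI : IdentDistrib (fun ω (p : 𝕏 × A) => X θ p.1 p.2 ω)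
      (fun ω (p : 𝕏 × A) => X η p.1 p.2 ω) μ μ :=
    ⟨(hX θ).aemeasurable, (hX η).aemeasurable, H.law_X θ η⟩
  exact (hI.comp (u := fun u : 𝕏 × A → 𝕏 => g (u (x, a))) (by fun_prop)).eLpNorm_eq 2

/-- A bound of the second moments of `V n` by the weight `w` propagates to the field evaluated at
an independent random point whose weight is controlled in mean square. -/
lemma eLpNorm_V_comp_le [IsProbabilityMeasure μ] (H : Setting μ M F f X V) {w : 𝕏 → ℝ}
    (hw : Measurable w) (hw0 : ∀ x, 0 < w x) {c : ℝ}
    (hXw : ∀ θ x a, eLpNorm (fun ω => w (X θ x a ω)) 2 μ ≤ ENNReal.ofReal (c * w x))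
    {n : ℕ} {K : ℝ≥0∞}
    (hK : ∀ θ x b, eLpNorm (fun ω => V n θ x b ω) 2 μ ≤ K * ENNReal.ofReal (w x))
    {η ζ : List ℤ} (h : η ∉ strict ζ) (x : 𝕏) (a b : A) :
    eLpNorm (fun ω => V n ζ (X η x a ω) b ω) 2 μ ≤ K * ENNReal.ofReal (c * w x) := by
  rw [eLpNorm_two_le_iff]
  have hind : Indep (F η) (sig F (strict ζ)) μ :=
    indep_of_indep_of_le_left (indep_sig H.le H.indep (Set.disjoint_singleton_left.2 h))
      (le_sig rfl)
  have hG : Measurable[mX.prod (sig F (strict ζ))] fun p : 𝕏 × Ω => ‖V n ζ p.1 b p.2‖ₑ ^ 2 :=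
    (continuous_enorm.measurable.pow_const 2).comp
      ((measurable_pi_apply b).comp (H.measurable_V n ζ))
  have hX : Measurable fun ω => X η x a ω := (H.measurable_X_fixed η x a).mono (H.le η) le_rfl
  rw [lintegral_freeze (H.le η) (sig_le H.le _) hind (H.measurable_X_fixed η x a) hG]
  calc ∫⁻ z, ∫⁻ ω, ‖V n ζ z b ω‖ₑ ^ 2 ∂μ ∂(μ.map fun ω => X η x a ω)
      ≤ ∫⁻ z, (K * ENNReal.ofReal (w z)) ^ 2 ∂(μ.map fun ω => X η x a ω) :=
        lintegral_mono fun z => (eLpNorm_two_le_iff _ _).1 (hK ζ z b)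
    _ = ∫⁻ ω, K ^ 2 * ‖w (X η x a ω)‖ₑ ^ 2 ∂μ := by
        rw [lintegral_map (by fun_prop) hX]
        refine lintegral_congr fun ω => ?_
        rw [mul_pow, Real.enorm_of_nonneg (hw0 _).le]
    _ = K ^ 2 * ∫⁻ ω, ‖w (X η x a ω)‖ₑ ^ 2 ∂μ :=
        lintegral_const_mul _ ((hw.comp hX).enorm.pow_const 2)
    _ ≤ K ^ 2 * ENNReal.ofReal (c * w x) ^ 2 := by
        gcongr
        exact (eLpNorm_two_le_iff _ _).1 (hXw η x a)
    _ = _ := (mul_pow _ _ _).symm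

lemma measurable_f_V_comp (H : Setting μ M F f X V) (n : ℕ) (η ζ : List ℤ) (x : 𝕏) (a : A) :
    Measurable (fun ω => fun b => V n ζ (X η x a ω) b ω) ∧
    Measurable fun ω => f (X η x a ω) (fun b => V n ζ (X η x a ω) b ω) := by
  have hX : Measurable fun ω => X η x a ω := (H.measurable_X_fixed η x a).mono (H.le η) le_rfl
  have hV : Measurable fun p : 𝕏 × Ω => fun b => V n ζ p.1 b p.2 :=
    (H.measurable_V n ζ).mono (prod_mono_right (sig_le H.le _)) le_rfl
  have h1 := hV.comp (hX.prodMk measurable_id)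
  exact ⟨h1, H.meas_f.comp (hX.prodMk h1)⟩

lemma eLpNorm_f_V_comp_le [IsProbabilityMeasure μ] [Fintype A] (H : Setting μ M F f X V)
    {w : 𝕏 → ℝ} (hw : Measurable w) (hw0 : ∀ x, 0 < w x) {c L : ℝ} (hc : 0 ≤ c)
    (hXw : ∀ θ x a, eLpNorm (fun ω => w (X θ x a ω)) 2 μ ≤ ENNReal.ofReal (c * w x))
    (hXf : ∀ θ x a, eLpNorm (fun ω => f (X θ x a ω) 0) 2 μ ≤ ENNReal.ofReal (c * w x))
    (hfL : ∀ x r, |f x r| ≤ |f x 0| + ∑ b, L * |r b|)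
    {n : ℕ} {K : ℝ≥0∞}
    (hK : ∀ θ x b, eLpNorm (fun ω => V n θ x b ω) 2 μ ≤ K * ENNReal.ofReal (w x))
    {η ζ : List ℤ} (h : η ∉ strict ζ) (x : 𝕏) (a : A) :
    eLpNorm (fun ω => f (X η x a ω) (fun b => V n ζ (X η x a ω) b ω)) 2 μ
      ≤ (ENNReal.ofReal c + ∑ _b : A, ‖L‖ₑ * (K * ENNReal.ofReal c)) * ENNReal.ofReal (w x) := by
  have hX : Measurable fun ω => X η x a ω := (H.measurable_X_fixed η x a).mono (H.le η) le_rfl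
  have hf0 : Measurable fun ω => f (X η x a ω) 0 := H.meas_f.comp (hX.prodMk measurable_const)
  have hVm : ∀ b, Measurable fun ω => V n ζ (X η x a ω) b ω := fun b =>
    (measurable_pi_apply b).comp (H.measurable_f_V_comp n η ζ x a).1
  calc eLpNorm (fun ω => f (X η x a ω) (fun b => V n ζ (X η x a ω) b ω)) 2 μ
      ≤ eLpNorm ((fun ω => ‖f (X η x a ω) 0‖)
          + ∑ b : A, L • fun ω => ‖V n ζ (X η x a ω) b ω‖) 2 μ := by
        refine eLpNorm_mono_real fun ω => ?_
        simpa using hfL (X η x a ω) fun b => V n ζ (X η x a ω) b ω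
    _ ≤ eLpNorm (fun ω => ‖f (X η x a ω) 0‖) 2 μ
          + ∑ b : A, eLpNorm (L • fun ω => ‖V n ζ (X η x a ω) b ω‖) 2 μ := by
        have hm : ∀ b ∈ (Finset.univ : Finset A),
            AEStronglyMeasurable (L • fun ω => ‖V n ζ (X η x a ω) b ω‖) μ := fun b _ =>
          ((hVm b).norm.const_smul L).aestronglyMeasurable
        refine (eLpNorm_add_le hf0.norm.aestronglyMeasurable
          (Finset.aestronglyMeasurable_sum _ hm) (by norm_num)).trans ?_
        gcongr
        exact eLpNorm_sum_le hm (by norm_num)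
    _ ≤ ENNReal.ofReal (c * w x) + ∑ _b : A, ‖L‖ₑ * (K * ENNReal.ofReal (c * w x)) := by
        refine add_le_add ((eLpNorm_norm _).trans_le (hXf η x a))
          (Finset.sum_le_sum fun b _ => ?_)
        rw [eLpNorm_const_smul, eLpNorm_norm]
        gcongr
        exact H.eLpNorm_V_comp_le hw hw0 hXw hK h x a b
    _ = _ := by
        rw [ENNReal.ofReal_mul hc, add_mul, Finset.sum_mul]
        congr 1
        refine Finset.sum_congr rfl fun b _ => ?_
        ring

/-- The second moments of the approximations and of the level differences (for admissible pairs)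
are finite: their `L²` norms are at most a constant times the weight `w`, uniformly in the
indices. -/
lemma exists_eLpNorm_le [IsProbabilityMeasure μ] [Fintype A] (H : Setting μ M F f X V)
    {w : 𝕏 → ℝ} (hw : Measurable w) (hw0 : ∀ x, 0 < w x) {c L : ℝ} (hc : 0 ≤ c)
    (hXw : ∀ θ x a, eLpNorm (fun ω => w (X θ x a ω)) 2 μ ≤ ENNReal.ofReal (c * w x))
    (hXf : ∀ θ x a, eLpNorm (fun ω => f (X θ x a ω) 0) 2 μ ≤ ENNReal.ofReal (c * w x))
    (hfL : ∀ x r, |f x r| ≤ |f x 0| + ∑ b, L * |r b|) (n : ℕ) :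
    (∃ K : ℝ≥0∞, K ≠ ∞ ∧ ∀ θ x b,
      eLpNorm (fun ω => V n θ x b ω) 2 μ ≤ K * ENNReal.ofReal (w x)) ∧
    (∃ K : ℝ≥0∞, K ≠ ∞ ∧ ∀ η ζ x a, Good n η ζ →
      eLpNorm (fun ω => lvl f X V n η ζ x a ω) 2 μ ≤ K * ENNReal.ofReal (w x)) := by
  induction n using Nat.strong_induction_on with
  | _ n ih =>
  have hV : ∃ K : ℝ≥0∞, K ≠ ∞ ∧ ∀ θ x b,
      eLpNorm (fun ω => V n θ x b ω) 2 μ ≤ K * ENNReal.ofReal (w x) := by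
    have ih2 : ∀ l : Fin n, _ := fun l => (ih l l.2).2
    choose K hKt hK using ih2
    refine ⟨∑ j : Idx M n, ‖((M : ℝ) ^ (n - (j.1 : ℕ)))⁻¹‖ₑ * K j.1,
      ENNReal.sum_ne_top.2 fun j _ => ENNReal.mul_ne_top enorm_ne_top (hKt _), fun θ x b => ?_⟩
    have e : (fun ω => V n θ x b ω) = ∑ j : Idx M n, ((M : ℝ) ^ (n - (j.1 : ℕ)))⁻¹ •
        fun ω => lvl f X V j.1 (fst' θ j) (snd' θ j) x b ω := by
      funext ω
      simp [H.rec_sum n θ x b ω]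
    rw [e, Finset.sum_mul]
    refine (eLpNorm_sum_le (fun j _ => (Measurable.const_smul ((H.measurable_lvl _ _ _ _ _).mono
      (sig_le H.le _) le_rfl) _).aestronglyMeasurable) (by norm_num)).trans
      (Finset.sum_le_sum fun j _ => ?_)
    rw [eLpNorm_const_smul, mul_assoc]
    gcongr
    exact hK j.1 _ _ x b (good_append θ _ _)
  refine ⟨hV, ?_⟩
  obtain ⟨K, hKt, hK⟩ := hV
  have h1 := fun (η : List ℤ) x a => H.eLpNorm_f_V_comp_le hw hw0 hc hXw hXf hfL hK
    (η := η) (ζ := η) (fun h => h.2 rfl) x a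
  have hfin : ∀ {K : ℝ≥0∞}, K ≠ ∞ →
      ENNReal.ofReal c + ∑ _b : A, ‖L‖ₑ * (K * ENNReal.ofReal c) ≠ ∞ := fun hK =>
    ENNReal.add_ne_top.2 ⟨ENNReal.ofReal_ne_top, ENNReal.sum_ne_top.2 fun _ _ => by finiteness⟩
  by_cases hn : n = 0
  · refine ⟨_, hfin hKt, fun η ζ x a _ => ?_⟩
    simp only [lvl, if_pos hn, sub_zero]
    exact h1 η x a
  · obtain ⟨K', hKt', hK'⟩ := (ih (n - 1) (by omega)).1
    refine ⟨(ENNReal.ofReal c + ∑ _b : A, ‖L‖ₑ * (K * ENNReal.ofReal c))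
      + (ENNReal.ofReal c + ∑ _b : A, ‖L‖ₑ * (K' * ENNReal.ofReal c)),
      ENNReal.add_ne_top.2 ⟨hfin hKt, hfin hKt'⟩,
      fun η ζ x a hg => ?_⟩
    simp only [lvl, if_neg hn]
    refine (eLpNorm_sub_le (H.measurable_f_V_comp n η η x a).2.aestronglyMeasurable
      (H.measurable_f_V_comp (n - 1) η ζ x a).2.aestronglyMeasurable (by norm_num)).trans ?_
    rw [add_mul]
    exact add_le_add (h1 η x a) (H.eLpNorm_f_V_comp_le hw hw0 hc hXw hXf hfL hK'
      (fun h => (hg hn).2 h.1) x a)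

/-! ### The variance identity -/

/-- The variance identity, for any pair `(η, ζ)` admissible at all levels. -/
lemma variance_V [IsProbabilityMeasure μ] (H : Setting μ M F f X V)
    (hL2 : ∀ l η ζ x a, Good l η ζ → MemLp (fun ω => lvl f X V l η ζ x a ω) 2 μ)
    {η ζ : List ℤ} (hg : ∀ l, Good l η ζ) (n : ℕ) (θ : List ℤ) (x : 𝕏) (a : A) :
    variance (fun ω => V n θ x a ω) μ = ∑ l ∈ Finset.range n, ((M : ℝ) ^ (n - l))⁻¹ *
      variance (fun ω => lvl f X V l η ζ x a ω) μ := by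
  have e : (fun ω => V n θ x a ω) = ∑ j : Idx M n, fun ω => ((M : ℝ) ^ (n - (j.1 : ℕ)))⁻¹ *
      lvl f X V j.1 (fst' θ j) (snd' θ j) x a ω := by
    funext ω
    simp [H.rec_sum n θ x a ω]
  rw [e, IndepFun.variance_sum]
  · have : ∀ j : Idx M n, variance (fun ω => ((M : ℝ) ^ (n - (j.1 : ℕ)))⁻¹ *
        lvl f X V j.1 (fst' θ j) (snd' θ j) x a ω) μ
        = (((M : ℝ) ^ (n - (j.1 : ℕ)))⁻¹) ^ 2 * variance (fun ω => lvl f X V j.1 η ζ x a ω) μ := by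
      intro j
      rw [variance_const_mul]
      exact congrArg _ (H.identDistrib_lvl j.1 (good_append θ _ _) (hg _) x a).variance_eq
    simp only [this]
    rw [Fintype.sum_sigma, Finset.sum_range]
    refine Finset.sum_congr rfl fun l _ => ?_
    -- `M ^ (n - l)` equal terms carry the weight `(M ^ (n - l))⁻¹ ^ 2`; for `M = 0` both sides
    -- vanish.
    simp only [Finset.sum_const, Finset.card_univ, Fintype.card_fin, nsmul_eq_mul]
    push_cast
    by_cases hM : (M : ℝ) ^ (n - (l : ℕ)) = 0
    · simp [hM]
    · field_simp
  · exact fun j _ => (hL2 _ _ _ x a (good_append θ _ _)).const_mul _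
  · intro i _ j _ hij
    have h := (H.iIndepFun_lvl n θ (fun _ : Unit => (x, a))).indepFun hij
    exact h.comp (φ := fun u : Unit → ℝ => ((M : ℝ) ^ (n - (i.1 : ℕ)))⁻¹ * u ())
      (ψ := fun u : Unit → ℝ => ((M : ℝ) ^ (n - (j.1 : ℕ)))⁻¹ * u ()) (by fun_prop) (by fun_prop)

end Setting
end Scheme
end MLFP


/-- Variance decomposition for MLFP approximations (first step of the proof of Lemma 3.7 of
the paper).  In the MLFP setting with finite `A` (with `Θ = ⋃_n ℤ^n` modelled by `List ℤ`, the
index `0` by `[0]` and the index `1` by `[1]`), under the stated Lipschitz and moment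
assumptions, for all `n ∈ ℕ₀`, `(x,a)` and `θ ∈ Θ` the variance of the level-`n` MLFP
approximation equals the weighted sum over the levels of the variances of the single-sample
level differences:
`Var[V_n^θ(x)(a)] = Σ_{l=0}^{n−1} M^{−(n−l)}
   Var[f(X^{0,x,a}, V_l^0(X^{0,x,a})) − 1_ℕ(l) f(X^{0,x,a}, V_{max{l−1,0}}^1(X^{0,x,a}))]`. -/
theorem stmt9
    {𝕏 : Type*} [mX : MeasurableSpace 𝕏] [Nonempty 𝕏]
    {Ω : Type*} [mΩ : MeasurableSpace Ω] (μ : Measure Ω) [IsProbabilityMeasure μ]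
    {A : Type*} [Fintype A] [Nonempty A]
    (M : ℕ)
    (F : List ℤ → MeasurableSpace Ω) (hFsub : ∀ θ, F θ ≤ mΩ)
    (hFindep : ProbabilityTheory.iIndep F μ)
    (f : 𝕏 → (A → ℝ) → ℝ)
    (hf : Measurable fun p : 𝕏 × (A → ℝ) => f p.1 p.2)
    (X : List ℤ → 𝕏 → A → Ω → 𝕏)
    (hXmeas : ∀ θ : List ℤ,
      @Measurable (𝕏 × Ω) (A → 𝕏) (mX.prod (F θ)) MeasurableSpace.pi
        fun p => fun a => X θ p.1 a p.2)
    (hXid : ∀ θ η : List ℤ,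
      Measure.map (fun ω => fun p : 𝕏 × A => X θ p.1 p.2 ω) μ
        = Measure.map (fun ω => fun p : 𝕏 × A => X η p.1 p.2 ω) μ)
    (V : ℕ → List ℤ → 𝕏 → A → Ω → ℝ)
    (hV : ∀ (n : ℕ) (θ : List ℤ) (x : 𝕏) (a : A) (ω : Ω),
      V n θ x a ω =
        ∑ l ∈ Finset.range n, ((M : ℝ) ^ (n - l))⁻¹ *
          ∑ i ∈ Finset.range (M ^ (n - l)),
            (f (X (θ ++ [(l : ℤ), (i : ℤ) + 1]) x a ω)
                (fun b => V l (θ ++ [(l : ℤ), (i : ℤ) + 1])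
                  (X (θ ++ [(l : ℤ), (i : ℤ) + 1]) x a ω) b ω)
              - if l = 0 then 0 else
                f (X (θ ++ [(l : ℤ), (i : ℤ) + 1]) x a ω)
                  (fun b => V (l - 1) (θ ++ [-(l : ℤ), (i : ℤ) + 1])
                    (X (θ ++ [(l : ℤ), (i : ℤ) + 1]) x a ω) b ω)))
    (c L : ℝ) (hc : 0 ≤ c) (hL : 0 ≤ L)
    (w : 𝕏 → ℝ) (hw_pos : ∀ x, 0 < w x) (hw_meas : Measurable w)
    (v : 𝕏 → A → ℝ) (hv_meas : Measurable v)
    (hf_lip : ∀ (x : 𝕏) (r s : A → ℝ), |f x r - f x s| ≤ L * ⨆ b : A, |r b - s b|)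
    (hmom : ∀ (x : 𝕏) (a : A),
      (∫⁻ ω, ENNReal.ofReal
          (|f (X ([0]) x a ω) 0| ^ 2 + (⨆ b : A, |v (X ([0]) x a ω) b|) ^ 2
            + w (X ([0]) x a ω) ^ 2) ∂μ)
        ≤ ENNReal.ofReal ((c * w x) ^ 2))
    :
    ∀ (n : ℕ) (x : 𝕏) (a : A) (θ : List ℤ),
      ProbabilityTheory.variance (fun ω => V n θ x a ω) μ
        = ∑ l ∈ Finset.range n, ((M : ℝ) ^ (n - l))⁻¹ *
            ProbabilityTheory.variance
              (fun ω =>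
                f (X ([0]) x a ω) (fun b => V l ([0]) (X ([0]) x a ω) b ω)
                  - if l = 0 then 0 else
                    f (X ([0]) x a ω) (fun b => V (l - 1) ([1]) (X ([0]) x a ω) b ω)) μ := by
  have H : MLFP.Setting μ M F f X V := ⟨hFsub, hFindep, hf, hXmeas, hXid, hV⟩
  have hfm : Measurable fun y => f y 0 := hf.comp (measurable_id.prodMk measurable_const)
  -- The moment assumption dominates each of its nonnegative summands.
  have hsq : ∀ {g : 𝕏 → ℝ}, Measurable g →
      (∀ y, g y ^ 2 ≤ |f y 0| ^ 2 + (⨆ b : A, |v y b|) ^ 2 + w y ^ 2) →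
      ∀ θ x a, eLpNorm (fun ω => g (X θ x a ω)) 2 μ ≤ ENNReal.ofReal (c * w x) := by
    intro g hg hle θ x a
    rw [H.eLpNorm_comp_X_eq hg θ [0], MLFP.eLpNorm_two_le_iff,
      ← ENNReal.ofReal_pow (mul_nonneg hc (hw_pos x).le)]
    refine (lintegral_mono fun ω => ?_).trans (hmom x a)
    rw [Real.enorm_eq_ofReal_abs, ← ENNReal.ofReal_pow (abs_nonneg _), sq_abs]
    exact ENNReal.ofReal_le_ofReal (hle _)
  have hXf := hsq hfm fun y => by
    rw [sq_abs]; nlinarith [sq_nonneg (⨆ b : A, |v y b|), sq_nonneg (w y)]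
  have hXw := hsq hw_meas fun y => by
    nlinarith [sq_nonneg (⨆ b : A, |v y b|), sq_nonneg |f y 0|]
  have hfL : ∀ x r, |f x r| ≤ |f x 0| + ∑ b, L * |r b| := by
    intro x r
    have h1 : (⨆ b : A, |r b - (0 : A → ℝ) b|) ≤ ∑ b, |r b| := by
      refine ciSup_le fun b => ?_
      simpa using Finset.single_le_sum (f := fun b => |r b|) (fun b _ => abs_nonneg _)
        (Finset.mem_univ b)
    have h2 := (hf_lip x r 0).trans (mul_le_mul_of_nonneg_left h1 hL)
    rw [← Finset.mul_sum]
    linarith [abs_sub_abs_le_abs_sub (f x r) (f x 0)]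
  have hL2 : ∀ l η ζ x a, MLFP.Good l η ζ →
      MemLp (fun ω => MLFP.lvl f X V l η ζ x a ω) 2 μ := by
    intro l η ζ x a hg
    obtain ⟨K, hKt, hK⟩ := (H.exists_eLpNorm_le hw_meas hw_pos hc hXw hXf hfL l).2
    exact ⟨((H.measurable_lvl l η ζ x a).mono (MLFP.sig_le H.le _) le_rfl).aestronglyMeasurable,
      (hK η ζ x a hg).trans_lt (ENNReal.mul_lt_top hKt.lt_top ENNReal.ofReal_lt_top)⟩
  intro n x a θ
  exact H.variance_V hL2 (η := [0]) (ζ := [1]) (fun l _ => by decide) n θ x a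
end
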